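/- arXiv:1302.0517 — 2 statements merged into one kernel-verified Lean document; each statement's English description precedes it below -/
import Mathlib

section
/- For every integer n > 2^3 = 8, every positive integer N, and every n-linear form U : (ℂ^N)^n → ℂ, one has (∑_{i₁,…,iₙ=1}^N |U(e_{i₁},…,e_{iₙ})|^{2n/(n+1)})^{(n+1)/(2n)} ≤ 1.02960973695 · (n-1)^{0.304975} · ‖U‖. -/
open Real

/-- The Bohnenblust--Hille quantity of an `n`-linear form on `ℓ_∞^N` over `ℂ`:
`(∑_{i₁,…,iₙ} |U(e_{i₁},…,e_{iₙ})|^{2n/(n+1)})^{(n+1)/(2n)}`. -/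
noncomputable def BHcomplex (n N : ℕ)
    (U : ContinuousMultilinearMap ℂ (fun _ : Fin n => (Fin N → ℂ)) ℂ) : ℝ :=
  (∑ i : Fin n → Fin N,
      ‖U (fun k => Pi.single (i k) (1 : ℂ))‖ ^ ((2 * n : ℝ) / (n + 1)))
    ^ ((n + 1 : ℝ) / (2 * n))


noncomputable def zt (j : Fin 5) : ℂ := (Complex.exp (2 * π * Complex.I / (5 : ℕ))) ^ (j : ℕ)

lemma zt_norm (j : Fin 5) : ‖zt j‖ = 1 := by
  have h := (Complex.isPrimitiveRoot_exp 5 (by norm_num)).norm'_eq_one (by norm_num)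
  simp only [zt, norm_pow]
  rw [h, one_pow]

lemma zt_sum (m : ℕ) (hm : 0 < m) (hm5 : m < 5) : ∑ j, zt j ^ m = 0 := by
  have hp := Complex.isPrimitiveRoot_exp 5 (by norm_num)
  simp only [zt]
  generalize Complex.exp (2 * π * Complex.I / (5 : ℕ)) = z at *
  have h5 : z ^ 5 = 1 := hp.pow_eq_one
  have hne : z ^ m ≠ 1 := hp.pow_ne_one_of_pos_of_lt hm.ne' hm5
  have h1 : (z ^ m - 1) * ∑ j : Fin 5, (z ^ (j : ℕ)) ^ m = (z ^ m) ^ 5 - 1 := by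
    simp only [Fin.sum_univ_five]
    simp
    ring
  rw [← pow_mul, mul_comm m 5, pow_mul, h5, one_pow, sub_self] at h1
  rcases mul_eq_zero.mp h1 with h | h
  · exact absurd (sub_eq_zero.mp h) hne
  · exact h

lemma zt_inv_sum (m : ℕ) (hm : 0 < m) (hm5 : m < 5) : ∑ j, (zt j)⁻¹ ^ m = 0 := by
  have h := congrArg (starRingEnd ℂ) (zt_sum m hm hm5)
  rw [map_sum, map_zero] at h
  rw [← h]
  refine Finset.sum_congr rfl fun j _ => ?_
  rw [map_pow, ← Complex.inv_eq_conj (zt_norm j)]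

lemma zt_laurent (c0 c1 c2 c3 c4 d1 d2 d3 d4 : ℂ) :
    ∑ j, (c0 + c1 * zt j ^ 1 + c2 * zt j ^ 2 + c3 * zt j ^ 3 + c4 * zt j ^ 4 +
      d1 * (zt j)⁻¹ ^ 1 + d2 * (zt j)⁻¹ ^ 2 + d3 * (zt j)⁻¹ ^ 3 + d4 * (zt j)⁻¹ ^ 4) = 5 * c0 := by
  simp only [Finset.sum_add_distrib, ← Finset.mul_sum]
  rw [zt_sum 1 (by norm_num) (by norm_num), zt_sum 2 (by norm_num) (by norm_num),
    zt_sum 3 (by norm_num) (by norm_num), zt_sum 4 (by norm_num) (by norm_num),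
    zt_inv_sum 1 (by norm_num) (by norm_num), zt_inv_sum 2 (by norm_num) (by norm_num),
    zt_inv_sum 3 (by norm_num) (by norm_num), zt_inv_sum 4 (by norm_num) (by norm_num)]
  simp

lemma zt_sq (X a : ℂ) (j : Fin 5) : (((‖a * zt j + X‖ ^ 2 : ℝ)) : ℂ) =
    (((‖X‖ ^ 2 + ‖a‖ ^ 2 : ℝ)) : ℂ) + (starRingEnd ℂ X * a) * zt j +
      (starRingEnd ℂ a * X) * (zt j)⁻¹ := by
  have hz : zt j ≠ 0 := by
    intro h; have := zt_norm j; rw [h] at this; simp at this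
  push_cast
  rw [← Complex.mul_conj', ← Complex.mul_conj', ← Complex.mul_conj']
  simp only [map_add, map_mul]
  rw [← Complex.inv_eq_conj (zt_norm j)]
  field_simp
  ring

lemma zt_prod (X a : ℂ) : (starRingEnd ℂ X * a) * (starRingEnd ℂ a * X) =
    (((‖X‖ ^ 2 : ℝ)) : ℂ) * (((‖a‖ ^ 2 : ℝ)) : ℂ) := by
  push_cast
  rw [← Complex.mul_conj', ← Complex.mul_conj']
  ring

lemma step1 (X a : ℂ) : ∑ j, (‖a * zt j + X‖ ^ 2) ^ 1 = 5 * (‖X‖ ^ 2 + ‖a‖ ^ 2) := by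
  have hpr := zt_prod X a
  apply Complex.ofReal_injective
  rw [Complex.ofReal_sum]
  simp only [Complex.ofReal_pow _ 1, zt_sq]
  generalize (starRingEnd ℂ X * a) = u at *
  generalize (starRingEnd ℂ a * X) = v at *
  rw [← sub_eq_zero, ← sub_eq_zero.mpr (zt_laurent (((‖X‖ ^ 2 + ‖a‖ ^ 2 : ℝ)) : ℂ) u 0 0 0 v 0 0 0)]
  congr 1
  · exact Finset.sum_congr rfl fun j _ => by ring
  · push_cast; ring

lemma step2 (X a : ℂ) : ∑ j, (‖a * zt j + X‖ ^ 2) ^ 2 =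
    5 * ((‖X‖ ^ 2) ^ 2 + 4 * ‖X‖ ^ 2 * ‖a‖ ^ 2 + (‖a‖ ^ 2) ^ 2) := by
  have hpr := zt_prod X a
  apply Complex.ofReal_injective
  rw [Complex.ofReal_sum]
  have hsq : ∀ j, ((((‖a * zt j + X‖ ^ 2) ^ 2 : ℝ)) : ℂ) =
      ((((‖X‖ ^ 2 + ‖a‖ ^ 2 : ℝ)) : ℂ) + (starRingEnd ℂ X * a) * zt j +
      (starRingEnd ℂ a * X) * (zt j)⁻¹) ^ 2 := fun j => by rw [Complex.ofReal_pow, zt_sq]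
  simp only [hsq]
  clear hsq
  generalize (starRingEnd ℂ X * a) = u at *
  generalize (starRingEnd ℂ a * X) = v at *
  generalize ‖X‖ ^ 2 = T at *
  generalize ‖a‖ ^ 2 = α at *
  rw [← sub_eq_zero]
  have hL := zt_laurent ((T + α : ℂ) ^ 2 + 2 * (u * v)) (2 * (T + α) * u) (u ^ 2) 0 0
    (2 * (T + α) * v) (v ^ 2) 0 0
  rw [← sub_eq_zero.mpr hL]
  congr 1
  · refine Finset.sum_congr rfl fun j _ => ?_
    have hz : zt j ≠ 0 := by
      intro h; have := zt_norm j; rw [h] at this; simp at this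
    push_cast
    field_simp
    ring
  · rw [hpr]; push_cast; ring

lemma step3 (X a : ℂ) : ∑ j, (‖a * zt j + X‖ ^ 2) ^ 3 =
    5 * ((‖X‖ ^ 2) ^ 3 + 9 * (‖X‖ ^ 2) ^ 2 * ‖a‖ ^ 2 + 9 * ‖X‖ ^ 2 * (‖a‖ ^ 2) ^ 2
      + (‖a‖ ^ 2) ^ 3) := by
  have hpr := zt_prod X a
  apply Complex.ofReal_injective
  rw [Complex.ofReal_sum]
  simp only [Complex.ofReal_pow _ 3, zt_sq]
  generalize (starRingEnd ℂ X * a) = u at *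
  generalize (starRingEnd ℂ a * X) = v at *
  generalize ‖X‖ ^ 2 = T at *
  generalize ‖a‖ ^ 2 = α at *
  rw [← sub_eq_zero]
  have hL := zt_laurent ((T + α : ℂ) ^ 3 + 6 * (T + α) * (u * v))
    (3 * (T + α) ^ 2 * u + 3 * u ^ 2 * v) (3 * (T + α) * u ^ 2) (u ^ 3) 0
    (3 * (T + α) ^ 2 * v + 3 * v ^ 2 * u) (3 * (T + α) * v ^ 2) (v ^ 3) 0
  rw [← sub_eq_zero.mpr hL]
  congr 1
  · refine Finset.sum_congr rfl fun j _ => ?_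
    have hz : zt j ≠ 0 := by
      intro h; have := zt_norm j; rw [h] at this; simp at this
    push_cast
    field_simp
    ring
  · rw [hpr]; push_cast; ring

lemma step4 (X a : ℂ) : ∑ j, (‖a * zt j + X‖ ^ 2) ^ 4 =
    5 * ((‖X‖ ^ 2) ^ 4 + 16 * (‖X‖ ^ 2) ^ 3 * ‖a‖ ^ 2 + 36 * (‖X‖ ^ 2) ^ 2 * (‖a‖ ^ 2) ^ 2
      + 16 * ‖X‖ ^ 2 * (‖a‖ ^ 2) ^ 3 + (‖a‖ ^ 2) ^ 4) := by
  have hpr := zt_prod X a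
  apply Complex.ofReal_injective
  rw [Complex.ofReal_sum]
  simp only [Complex.ofReal_pow _ 4, zt_sq]
  generalize (starRingEnd ℂ X * a) = u at *
  generalize (starRingEnd ℂ a * X) = v at *
  generalize ‖X‖ ^ 2 = T at *
  generalize ‖a‖ ^ 2 = α at *
  rw [← sub_eq_zero]
  have hL := zt_laurent ((T + α : ℂ) ^ 4 + 12 * (T + α) ^ 2 * (u * v) + 6 * (u * v) ^ 2)
    (4 * (T + α) ^ 3 * u + 12 * (T + α) * u ^ 2 * v) (6 * (T + α) ^ 2 * u ^ 2 + 4 * u ^ 3 * v)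
    (4 * (T + α) * u ^ 3) (u ^ 4)
    (4 * (T + α) ^ 3 * v + 12 * (T + α) * v ^ 2 * u) (6 * (T + α) ^ 2 * v ^ 2 + 4 * v ^ 3 * u)
    (4 * (T + α) * v ^ 3) (v ^ 4)
  rw [← sub_eq_zero.mpr hL]
  congr 1
  · refine Finset.sum_congr rfl fun j _ => ?_
    have hz : zt j ≠ 0 := by
      intro h; have := zt_norm j; rw [h] at this; simp at this
    push_cast
    field_simp
    ring
  · rw [hpr]; push_cast; ring

/-- The random sum. -/
noncomputable def rs {N : ℕ} (a : Fin N → ℂ) (ε : Fin N → Fin 5) : ℂ := ∑ i, a i * zt (ε i)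

/-- Sum over sign choices splits. -/
lemma sum_split {N : ℕ} (a : Fin (N + 1) → ℂ) (F : ℂ → ℝ) :
    ∑ ε : Fin (N + 1) → Fin 5, F (rs a ε) =
      ∑ ε : Fin N → Fin 5, ∑ j, F (a 0 * zt j + rs (Fin.tail a) ε) := by
  rw [← (Fin.insertNthEquiv (fun _ => Fin 5) 0).sum_comp, Fintype.sum_prod_type, Finset.sum_comm]
  refine Finset.sum_congr rfl fun ε _ => Finset.sum_congr rfl fun j _ => ?_
  simp [rs, Fin.sum_univ_succ, Fin.tail]

lemma moments (N : ℕ) (a : Fin N → ℂ) :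
    (∑ ε, (‖rs a ε‖ ^ 2) ^ 1 = 5 ^ N * ∑ i, ‖a i‖ ^ 2) ∧
    (∑ ε, (‖rs a ε‖ ^ 2) ^ 2 = 5 ^ N * (2 * (∑ i, ‖a i‖ ^ 2) ^ 2 - ∑ i, (‖a i‖ ^ 2) ^ 2)) ∧
    (∑ ε, (‖rs a ε‖ ^ 2) ^ 3 = 5 ^ N * (6 * (∑ i, ‖a i‖ ^ 2) ^ 3
      - 9 * (∑ i, ‖a i‖ ^ 2) * (∑ i, (‖a i‖ ^ 2) ^ 2) + 4 * ∑ i, (‖a i‖ ^ 2) ^ 3)) ∧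
    (∑ ε, (‖rs a ε‖ ^ 2) ^ 4 = 5 ^ N * (24 * (∑ i, ‖a i‖ ^ 2) ^ 4
      - 72 * (∑ i, ‖a i‖ ^ 2) ^ 2 * (∑ i, (‖a i‖ ^ 2) ^ 2) + 18 * (∑ i, (‖a i‖ ^ 2) ^ 2) ^ 2
      + 64 * (∑ i, ‖a i‖ ^ 2) * (∑ i, (‖a i‖ ^ 2) ^ 3) - 33 * ∑ i, (‖a i‖ ^ 2) ^ 4)) := by
  induction N with
  | zero => simp [rs]
  | succ N ih =>
    obtain ⟨h1, h2, h3, h4⟩ := ih (Fin.tail a)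
    rw [sum_split a (fun z => (‖z‖ ^ 2) ^ 1), sum_split a (fun z => (‖z‖ ^ 2) ^ 2),
      sum_split a (fun z => (‖z‖ ^ 2) ^ 3), sum_split a (fun z => (‖z‖ ^ 2) ^ 4)]
    simp only [step1, step2, step3, step4, Fin.sum_univ_succ (n := N)]
    have ht : ∀ i, a (Fin.succ i) = Fin.tail a i := fun i => rfl
    simp only [ht]
    simp only [pow_one] at h1
    simp only [← Finset.mul_sum, Finset.sum_add_distrib, ← Finset.sum_mul, h1, h2, h3, h4,
      Finset.sum_const, Finset.card_univ, Fintype.card_pi, Fintype.card_fin, Finset.prod_const,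
      nsmul_eq_mul, Nat.cast_pow, Nat.cast_ofNat, pow_succ (5 : ℝ) N]
    refine ⟨by ring, by ring, by ring, by ring⟩

lemma power_sums {N : ℕ} (b : Fin N → ℝ) (hb : ∀ i, 0 ≤ b i) (h1 : ∑ i, b i = 1) :
    0 < ∑ i, b i ^ 2 ∧ (∑ i, b i ^ 3 ≤ ∑ i, b i ^ 2) ∧ ((∑ i, b i ^ 2) ^ 2 ≤ ∑ i, b i ^ 3) ∧
    ((∑ i, b i ^ 3) ^ 2 ≤ (∑ i, b i ^ 2) * ∑ i, b i ^ 4) := by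
  have hle : ∀ i, b i ≤ 1 := fun i => by
    rw [← h1]; exact Finset.single_le_sum (fun i _ => hb i) (Finset.mem_univ i)
  refine ⟨?_, ?_, ?_, ?_⟩
  · by_contra h
    have h0 : ∑ i, b i ^ 2 = 0 := le_antisymm (not_lt.mp h) (Finset.sum_nonneg fun i _ => sq_nonneg _)
    rw [Finset.sum_eq_zero_iff_of_nonneg (fun i _ => sq_nonneg _)] at h0
    have : ∑ i, b i = 0 := Finset.sum_eq_zero fun i hi => by simpa using h0 i hi
    linarith
  · refine Finset.sum_le_sum fun i _ => ?_
    nlinarith [hb i, hle i, sq_nonneg (b i)]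
  · have := Finset.sum_sq_le_sum_mul_sum_of_sq_le_mul Finset.univ (r := fun i => b i ^ 2)
      (f := b) (g := fun i => b i ^ 3) (fun i _ => hb i) (fun i _ => pow_nonneg (hb i) 3)
      (fun i _ => le_of_eq (by ring))
    rwa [h1, one_mul] at this
  · exact Finset.sum_sq_le_sum_mul_sum_of_sq_le_mul Finset.univ (r := fun i => b i ^ 3)
      (f := fun i => b i ^ 2) (g := fun i => b i ^ 4) (fun i _ => pow_nonneg (hb i) 2)
      (fun i _ => pow_nonneg (hb i) 4) (fun i _ => le_of_eq (by ring))

lemma quad_cond {s2 s3 s4 q2 q3 q4 : ℝ} (hs2 : 0 < s2) (hs3 : s2 ^ 2 ≤ s3) (hs : s3 ^ 2 ≤ s2 * s4)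
    (hq4 : 0 < q4)
    (hd : (4 * q3 + 82 * q4) ^ 2 ≤ 132 * (q2 + 9 * q3 + 72 * q4) * q4) :
    0 ≤ q2 * s2 + q3 * (9 * s2 - 4 * s3) + q4 * (72 * s2 - 18 * s2 ^ 2 - 64 * s3 + 33 * s4) := by
  have key : 0 ≤ s2 * (q2 * s2 + q3 * (9 * s2 - 4 * s3)
      + q4 * (72 * s2 - 18 * s2 ^ 2 - 64 * s3 + 33 * s4)) := by
    have e1 : 0 ≤ q4 * s2 * (s3 - s2 ^ 2) := by
      apply mul_nonneg (by positivity); linarith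
    have e2 : 0 ≤ q4 * (s2 * s4 - s3 ^ 2) := by
      apply mul_nonneg (by positivity); linarith
    have e3 : 0 ≤ (q2 + 9 * q3 + 72 * q4) * s2 ^ 2 - (4 * q3 + 82 * q4) * (s2 * s3)
        + 33 * q4 * s3 ^ 2 := by
      have : 0 ≤ 132 * q4 * ((q2 + 9 * q3 + 72 * q4) * s2 ^ 2 - (4 * q3 + 82 * q4) * (s2 * s3)
        + 33 * q4 * s3 ^ 2) := by
        nlinarith [sq_nonneg (66 * q4 * s3 - (4 * q3 + 82 * q4) * s2),
          mul_nonneg (sub_nonneg.mpr hd) (sq_nonneg s2)]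
      exact nonneg_of_mul_nonneg_right this (by positivity)
    nlinarith
  exact nonneg_of_mul_nonneg_right key hs2

lemma khin {s g q1 q2 q3 q4 : ℝ} (hs : 0 < s) (hq4 : 0 < q4)
    (hpoly : ∀ t : ℝ, 0 ≤ t → q1 * t - q2 * t ^ 2 - q3 * t ^ 3 - q4 * t ^ 4 ≤ t ^ s)
    (hd : (4 * q3 + 82 * q4) ^ 2 ≤ 132 * (q2 + 9 * q3 + 72 * q4) * q4)
    (hg : g ≤ q1 - 2 * q2 - 6 * q3 - 24 * q4) (N : ℕ) (a : Fin N → ℂ) :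
    g * (∑ i, ‖a i‖ ^ 2) ^ s ≤ (5 ^ N)⁻¹ * ∑ ε, (‖rs a ε‖ ^ 2) ^ s := by
  obtain ⟨h1, h2, h3, h4⟩ := moments N a
  set σ := ∑ i, ‖a i‖ ^ 2 with hσ
  have hσ0 : 0 ≤ σ := Finset.sum_nonneg fun i _ => by positivity
  rcases hσ0.eq_or_lt with h0 | hpos
  · rw [← h0, Real.zero_rpow hs.ne', mul_zero]
    exact mul_nonneg (by positivity) (Finset.sum_nonneg fun i _ => by positivity)
  have hb := power_sums (fun i => ‖a i‖ ^ 2 / σ) (fun i => by positivity)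
    (by rw [← Finset.sum_div, div_self hpos.ne'])
  have hdp : ∀ r : ℕ, ∑ i, (‖a i‖ ^ 2 / σ) ^ r = (∑ i, (‖a i‖ ^ 2) ^ r) / σ ^ r := fun r => by
    simp only [div_pow, ← Finset.sum_div]
  simp only [hdp] at hb
  obtain ⟨b1, b2, b3, b4⟩ := hb
  have hc := quad_cond b1 b3 b4 hq4 hd
  have hsum : ∑ ε, (q1 * (‖rs a ε‖ ^ 2 / σ) - q2 * (‖rs a ε‖ ^ 2 / σ) ^ 2
      - q3 * (‖rs a ε‖ ^ 2 / σ) ^ 3 - q4 * (‖rs a ε‖ ^ 2 / σ) ^ 4)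
      ≤ ∑ ε, (‖rs a ε‖ ^ 2 / σ) ^ s :=
    Finset.sum_le_sum fun ε _ => hpoly _ (by positivity)
  have hR : ∑ ε, (‖rs a ε‖ ^ 2 / σ) ^ s = (∑ ε, (‖rs a ε‖ ^ 2) ^ s) / σ ^ s := by
    rw [Finset.sum_div]
    exact Finset.sum_congr rfl fun ε _ => Real.div_rpow (by positivity) hσ0 _
  have hL : ∑ ε, (q1 * (‖rs a ε‖ ^ 2 / σ) - q2 * (‖rs a ε‖ ^ 2 / σ) ^ 2
      - q3 * (‖rs a ε‖ ^ 2 / σ) ^ 3 - q4 * (‖rs a ε‖ ^ 2 / σ) ^ 4) =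
      5 ^ N * ((q1 - 2 * q2 - 6 * q3 - 24 * q4) +
      (q2 * ((∑ i, (‖a i‖ ^ 2) ^ 2) / σ ^ 2) + q3 * (9 * ((∑ i, (‖a i‖ ^ 2) ^ 2) / σ ^ 2)
       - 4 * ((∑ i, (‖a i‖ ^ 2) ^ 3) / σ ^ 3)) + q4 * (72 * ((∑ i, (‖a i‖ ^ 2) ^ 2) / σ ^ 2)
       - 18 * ((∑ i, (‖a i‖ ^ 2) ^ 2) / σ ^ 2) ^ 2 - 64 * ((∑ i, (‖a i‖ ^ 2) ^ 3) / σ ^ 3)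
       + 33 * ((∑ i, (‖a i‖ ^ 2) ^ 4) / σ ^ 4)))) := by
    simp only [div_pow, Finset.sum_sub_distrib, ← Finset.mul_sum, ← Finset.sum_div]
    simp only [pow_one] at h1
    rw [h1, h2, h3, h4]
    field_simp
    ring
  rw [hR, hL] at hsum
  have h5 : (0 : ℝ) < 5 ^ N := by positivity
  have hσs : 0 < σ ^ s := Real.rpow_pos_of_pos hpos s
  rw [le_div_iff₀ hσs] at hsum
  rw [inv_mul_eq_div, le_div_iff₀ h5]
  refine le_trans ?_ hsum
  have : g ≤ (q1 - 2 * q2 - 6 * q3 - 24 * q4) +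
      (q2 * ((∑ i, (‖a i‖ ^ 2) ^ 2) / σ ^ 2) + q3 * (9 * ((∑ i, (‖a i‖ ^ 2) ^ 2) / σ ^ 2)
       - 4 * ((∑ i, (‖a i‖ ^ 2) ^ 3) / σ ^ 3)) + q4 * (72 * ((∑ i, (‖a i‖ ^ 2) ^ 2) / σ ^ 2)
       - 18 * ((∑ i, (‖a i‖ ^ 2) ^ 2) / σ ^ 2) ^ 2 - 64 * ((∑ i, (‖a i‖ ^ 2) ^ 3) / σ ^ 3)
       + 33 * ((∑ i, (‖a i‖ ^ 2) ^ 4) / σ ^ 4))) := by linarith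
  have h6 := mul_le_mul_of_nonneg_right this (mul_pos hσs h5).le
  linarith

lemma log_bd {t : ℝ} (ht : 0 < t) :
    log t ≤ -1.126 + 503 / 360 * t - 101 / 360 * t ^ 2 + 8 / 360 * t ^ 3 := by
  set G : ℝ → ℝ := fun t => -1.126 + 503 / 360 * t - 101 / 360 * t ^ 2 + 8 / 360 * t ^ 3 - log t
    with hG
  have hder : ∀ x : ℝ, 0 < x →
      HasDerivAt G ((x - 5 / 4) * (x - 8 / 3) * (x - 9 / 2) / (15 * x)) x := by
    intro x hx
    have h := (((((hasDerivAt_id x).const_mul (503 / 360 : ℝ)).const_add (-1.126 : ℝ)).sub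
      ((hasDerivAt_pow 2 x).const_mul (101 / 360 : ℝ))).add
      ((hasDerivAt_pow 3 x).const_mul (8 / 360 : ℝ))).sub (Real.hasDerivAt_log hx.ne')
    refine h.congr_deriv ?_
    field_simp
    norm_num
    ring
  have hcont : ∀ S : Set ℝ, S ⊆ Set.Ioi 0 → ContinuousOn G S := fun S hS x hx =>
    (hder x (hS hx)).continuousAt.continuousWithinAt
  have hl2 : log 2 < 0.6931471808 := Real.log_two_lt_d9
  have hA : 0 ≤ G (5 / 4) := by
    have : log ((5 / 4 : ℝ) ^ 31) ≤ log (2 ^ 10) := Real.log_le_log (by positivity) (by norm_num)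
    rw [Real.log_pow, Real.log_pow] at this
    push_cast at this
    simp only [hG]
    norm_num at this ⊢
    linarith
  have hB : 0 ≤ G (9 / 2) := by
    have : log ((9 / 2 : ℝ) ^ 47) ≤ log (2 ^ 102) := Real.log_le_log (by positivity) (by norm_num)
    rw [Real.log_pow, Real.log_pow] at this
    push_cast at this
    simp only [hG]
    norm_num at this ⊢
    linarith
  suffices h : 0 ≤ G t by simp only [hG] at h; linarith
  have mono : ∀ a b : ℝ, 0 < a → a ≤ b → (∀ x, a < x → x < b →
      0 ≤ (x - 5 / 4) * (x - 8 / 3) * (x - 9 / 2)) → G a ≤ G b := by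
    intro a b ha hab hx
    refine monotoneOn_of_deriv_nonneg (convex_Icc a b)
      (hcont _ fun x hx => lt_of_lt_of_le ha hx.1) ?_ ?_
      (Set.left_mem_Icc.mpr hab) (Set.right_mem_Icc.mpr hab) hab
    · intro x hx
      rw [interior_Icc] at hx
      exact (hder x (ha.trans hx.1)).differentiableAt.differentiableWithinAt
    · intro x hxi
      rw [interior_Icc] at hxi
      have h0 := ha.trans hxi.1
      rw [(hder x h0).deriv]
      exact div_nonneg (hx x hxi.1 hxi.2) (by positivity)
  have anti : ∀ a b : ℝ, 0 < a → a ≤ b → (∀ x, a < x → x < b →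
      (x - 5 / 4) * (x - 8 / 3) * (x - 9 / 2) ≤ 0) → G b ≤ G a := by
    intro a b ha hab hx
    refine antitoneOn_of_deriv_nonpos (convex_Icc a b)
      (hcont _ fun x hx => lt_of_lt_of_le ha hx.1) ?_ ?_
      (Set.left_mem_Icc.mpr hab) (Set.right_mem_Icc.mpr hab) hab
    · intro x hx
      rw [interior_Icc] at hx
      exact (hder x (ha.trans hx.1)).differentiableAt.differentiableWithinAt
    · intro x hxi
      rw [interior_Icc] at hxi
      have h0 := ha.trans hxi.1
      rw [(hder x h0).deriv]
      exact div_nonpos_of_nonpos_of_nonneg (hx x hxi.1 hxi.2) (by positivity)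
  rcases le_total t (5 / 4) with h1 | h1
  · refine hA.trans (anti _ _ ht h1 fun x hx1 hx2 => ?_)
    exact mul_nonpos_of_nonneg_of_nonpos
      (mul_nonneg_of_nonpos_of_nonpos (by linarith) (by linarith)) (by linarith)
  rcases le_total t (8 / 3) with h2 | h2
  · refine hA.trans (mono _ _ (by norm_num) h1 fun x hx1 hx2 => ?_)
    exact mul_nonneg_of_nonpos_of_nonpos
      (mul_nonpos_of_nonneg_of_nonpos (by linarith) (by linarith)) (by linarith)
  rcases le_total t (9 / 2) with h3 | h3
  · refine hB.trans (anti _ _ (by linarith) h3 fun x hx1 hx2 => ?_)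
    exact mul_nonpos_of_nonneg_of_nonpos
      (mul_nonneg (by linarith) (by linarith)) (by linarith)
  · refine hB.trans (mono _ _ (by norm_num) h3 fun x hx1 hx2 => ?_)
    exact mul_nonneg (mul_nonneg (by linarith) (by linarith)) (by linarith)

/-- polynomial minorant of `t ^ s`, general `s < 1` -/
lemma minor_gen {s : ℝ} (hs : 0 < s) (hs1 : s < 1) (t : ℝ) (ht : 0 ≤ t) :
    (exp (-(1 - s) * 0.519) * (1 + (1 - s) * (0.519 + 1.126))) * t
      - (exp (-(1 - s) * 0.519) * (1 - s) * (503 / 360)) * t ^ 2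
      - (exp (-(1 - s) * 0.519) * (1 - s) * (-101 / 360)) * t ^ 3
      - (exp (-(1 - s) * 0.519) * (1 - s) * (8 / 360)) * t ^ 4 ≤ t ^ s := by
  rcases ht.eq_or_lt with h0 | hpos
  · rw [← h0, Real.zero_rpow hs.ne']; simp
  have hl := log_bd hpos
  have e1 : t ^ s = t * (exp (-(1 - s) * 0.519) * exp (-(1 - s) * (log t - 0.519))) := by
    rw [← Real.exp_add, Real.rpow_def_of_pos hpos]
    nth_rewrite 2 [← Real.exp_log hpos]
    rw [← Real.exp_add]; congr 1; ring
  rw [e1]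
  have e2 := Real.add_one_le_exp (-(1 - s) * (log t - 0.519))
  have hE := Real.exp_pos (-(1 - s) * 0.519)
  have e3 : 1 - (1 - s) * ((-1.126 + 503 / 360 * t - 101 / 360 * t ^ 2 + 8 / 360 * t ^ 3) - 0.519)
     ≤ exp (-(1 - s) * (log t - 0.519)) := by
    nlinarith [mul_le_mul_of_nonneg_left hl (by linarith : (0:ℝ) ≤ 1 - s)]
  have e4 := mul_le_mul_of_nonneg_left e3 (mul_pos hpos hE).le
  nlinarith [e4]

lemma minor_two (t : ℝ) (ht : 0 ≤ t) :
    (29530645/19228521) * t - (546167649460/789657671907) * t ^ 2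
      - (-13942217216/87739741323) * t ^ 3 - (125255680/9748860147) * t ^ 4 ≤ t ^ (1 / 2 : ℝ) := by
  rw [← Real.sqrt_eq_rpow]
  have hr := Real.sqrt_nonneg t
  have ht2 := Real.sq_sqrt ht
  generalize √t = r at *
  subst ht2
  have : 0 ≤ r * ((r - 9 / 8) ^ 2 * (r - 13 / 6) ^ 2 * (256/1521 * r ^ 0 + 17205347584/87739741323 * r ^ 1 + 31313920/370209879 * r ^ 2 + 125255680/9748860147 * r ^ 3)) := by positivity
  nlinarith [this]

lemma minor_three (t : ℝ) (ht : 0 ≤ t) :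
    (50457281028/37031981285) * t - (4704401937616983/10169907860393125) * t ^ 2
      - (-1041763185581184/10169907860393125) * t ^ 3
      - (83683655774208/10169907860393125) * t ^ 4 ≤ t ^ (2 / 3 : ℝ) := by
  obtain ⟨u, hu, rfl⟩ : ∃ u : ℝ, 0 ≤ u ∧ u ^ 3 = t :=
    ⟨t ^ (1 / 3 : ℝ), by positivity, by
      rw [← Real.rpow_natCast, ← Real.rpow_mul ht]; norm_num⟩
  have e : (u ^ 3) ^ (2 / 3 : ℝ) = u ^ 2 := by
    rw [← Real.rpow_natCast u 3, ← Real.rpow_mul hu, ← Real.rpow_natCast]; norm_num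
  rw [e]
  have : 0 ≤ u ^ 2 * ((u - 13 / 12) ^ 2 * (u - 5 / 3) ^ 2 * (1296/4225 * u ^ 0 + 80802789227424/156460120929125 * u ^ 1 + 5306750470098288/10169907860393125 * u ^ 2 + 3426595350862464/10169907860393125 * u ^ 3 + 1596381961192704/10169907860393125 * u ^ 4 + 460260106758144/10169907860393125 * u ^ 5 + 83683655774208/10169907860393125 * u ^ 6)) := by positivity
  nlinarith [this]

lemma holder_multi {κ ι : Type*} [Fintype κ] [Fintype ι] (w : κ → ℝ) (hw : ∀ k, 0 < w k)
    (hw1 : ∑ k, w k = 1) (F : κ → ι → ℝ) (hF : ∀ k x, 0 ≤ F k x) :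
    ∑ x, ∏ k, F k x ^ w k ≤ ∏ k, (∑ x, F k x) ^ w k := by
  have hS : ∀ k, 0 ≤ ∑ x, F k x := fun k => Finset.sum_nonneg fun x _ => hF k x
  by_cases h : ∃ k, ∑ x, F k x = 0
  · obtain ⟨k, hk⟩ := h
    have hk0 := (Finset.sum_eq_zero_iff_of_nonneg (fun x _ => hF k x)).mp hk
    have : ∑ x, ∏ k, F k x ^ w k = 0 := Finset.sum_eq_zero fun x hx =>
      Finset.prod_eq_zero (Finset.mem_univ k) (by rw [hk0 x hx, Real.zero_rpow (hw k).ne'])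
    rw [this]
    exact Finset.prod_nonneg fun k _ => Real.rpow_nonneg (hS k) _
  · push Not at h
    have hpos : ∀ k, 0 < ∑ x, F k x := fun k => lt_of_le_of_ne (hS k) (Ne.symm (h k))
    have hP : 0 < ∏ k, (∑ x, F k x) ^ w k := Finset.prod_pos fun k _ => Real.rpow_pos_of_pos (hpos k) _
    rw [← div_le_one hP, Finset.sum_div]
    calc ∑ x, (∏ k, F k x ^ w k) / ∏ k, (∑ x, F k x) ^ w k
        = ∑ x, ∏ k, (F k x / ∑ x, F k x) ^ w k := by
          refine Finset.sum_congr rfl fun x _ => ?_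
          rw [← Finset.prod_div_distrib]
          exact Finset.prod_congr rfl fun k _ => (Real.div_rpow (hF k x) (hS k) _).symm
      _ ≤ ∑ x, ∑ k, w k * (F k x / ∑ x, F k x) := by
          refine Finset.sum_le_sum fun x _ => ?_
          exact Real.geom_mean_le_arith_mean_weighted _ _ _ (fun k _ => (hw k).le) hw1
            (fun k _ => div_nonneg (hF k x) (hS k))
      _ = 1 := by
          rw [Finset.sum_comm, ← hw1]
          refine Finset.sum_congr rfl fun k _ => ?_
          rw [← Finset.mul_sum, ← Finset.sum_div, div_self (h k), mul_one]

/-- Mixed norm. -/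
noncomputable def mn {ι : Type*} [Fintype ι] : (m : ℕ) → (Fin m → ℝ) → ((Fin m → ι) → ℝ) → ℝ
  | 0, _, f => f Fin.elim0
  | m + 1, e, f => (∑ x, (mn m (Fin.tail e) (fun b => f (Fin.cons x b))) ^ (e 0)) ^ (1 / e 0)

lemma mn_nonneg {ι : Type*} [Fintype ι] (m : ℕ) (e : Fin m → ℝ) (f : (Fin m → ι) → ℝ)
    (hf : ∀ i, 0 ≤ f i) : 0 ≤ mn m e f := by
  induction m with
  | zero => exact hf _
  | succ m ih =>
    exact Real.rpow_nonneg (Finset.sum_nonneg fun x _ => Real.rpow_nonneg (ih _ _ fun i => hf _) _) _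

lemma mn_holder {ι κ : Type*} [Fintype ι] [Fintype κ] (w : κ → ℝ) (hw : ∀ k, 0 < w k)
    (hw1 : ∑ k, w k = 1) (m : ℕ) (e : Fin m → ℝ) (he : ∀ j, 0 < e j) (E : κ → Fin m → ℝ)
    (hE : ∀ k j, 0 < E k j) (h : ∀ j, 1 / e j = ∑ k, w k / E k j) (f : (Fin m → ι) → ℝ)
    (hf : ∀ i, 0 ≤ f i) : mn m e f ≤ ∏ k, (mn m (E k) f) ^ w k := by
  induction m with
  | zero =>
    simp only [mn]
    rw [← Real.rpow_sum_of_nonneg (hf _) (fun k _ => (hw k).le), hw1, Real.rpow_one]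
  | succ m ih =>
    have hg : ∀ k x, 0 ≤ mn m (Fin.tail (E k)) (fun b => f (Fin.cons x b)) :=
      fun k x => mn_nonneg _ _ _ fun i => hf _
    simp only [mn]
    have e0 := he 0
    have step : ∑ x, (mn m (Fin.tail e) (fun b => f (Fin.cons x b))) ^ (e 0) ≤
        ∏ k, (∑ x, (mn m (Fin.tail (E k)) (fun b => f (Fin.cons x b))) ^ (E k 0))
          ^ (w k * e 0 / E k 0) := by
      refine le_trans ?_ (holder_multi (fun k => w k * e 0 / E k 0)
        (fun k => div_pos (mul_pos (hw k) e0) (hE k 0)) ?_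
        (fun k x => (mn m (Fin.tail (E k)) (fun b => f (Fin.cons x b))) ^ (E k 0))
        (fun k x => Real.rpow_nonneg (hg k x) _))
      · refine Finset.sum_le_sum fun x _ => ?_
        refine (Real.rpow_le_rpow (mn_nonneg _ _ _ fun i => hf _)
          (ih (Fin.tail e) (fun j => he _) (fun k => Fin.tail (E k)) (fun k j => hE k _)
            (fun j => h _) (fun b => f (Fin.cons x b)) (fun i => hf _)) e0.le).trans ?_
        rw [← Real.finsetProd_rpow _ _ (fun k _ => Real.rpow_nonneg (hg k x) _)]
        refine le_of_eq (Finset.prod_congr rfl fun k _ => ?_)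
        rw [← Real.rpow_mul (hg k x), ← Real.rpow_mul (hg k x)]
        congr 1
        have := (hE k 0).ne'
        field_simp
      · have h0 := h 0
        have : ∑ k, w k * e 0 / E k 0 = e 0 * ∑ k, w k / E k 0 := by
          rw [Finset.mul_sum]; exact Finset.sum_congr rfl fun k _ => by ring
        rw [this, ← h0]; field_simp
    refine (Real.rpow_le_rpow (Finset.sum_nonneg fun x _ => Real.rpow_nonneg
      (mn_nonneg _ _ _ fun i => hf _) _) step (by positivity)).trans ?_
    have hS : ∀ k, 0 ≤ ∑ x, (mn m (Fin.tail (E k)) (fun b => f (Fin.cons x b))) ^ (E k 0) :=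
      fun k => Finset.sum_nonneg fun x _ => Real.rpow_nonneg (hg k x) _
    rw [← Real.finsetProd_rpow _ _ (fun k _ => Real.rpow_nonneg (hS k) _)]
    refine le_of_eq (Finset.prod_congr rfl fun k _ => ?_)
    rw [← Real.rpow_mul (hS k), ← Real.rpow_mul (hS k)]
    congr 1
    have := (hE k 0).ne'
    field_simp

lemma sum_cons_split {ι : Type*} [Fintype ι] (m : ℕ) (g : (Fin (m + 1) → ι) → ℝ) :
    ∑ i, g i = ∑ x, ∑ b : Fin m → ι, g (Fin.cons x b) := by
  rw [← (Fin.insertNthEquiv (fun _ => ι) 0).sum_comp, Fintype.sum_prod_type]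
  refine Finset.sum_congr rfl fun x _ => Finset.sum_congr rfl fun b _ => ?_
  simp [Fin.consEquiv]

lemma mn_const {ι : Type*} [Fintype ι] {p : ℝ} (hp : 0 < p) (m : ℕ) (f : (Fin m → ι) → ℝ)
    (hf : ∀ i, 0 ≤ f i) : mn m (fun _ => p) f = (∑ i, f i ^ p) ^ (1 / p) := by
  induction m with
  | zero =>
    simp only [mn, Finset.univ_unique, Finset.sum_singleton]
    rw [← Real.rpow_mul (hf _), mul_one_div_cancel hp.ne', Real.rpow_one]
    congr 1
  | succ m ih =>
    simp only [mn]
    rw [sum_cons_split]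
    congr 1
    refine Finset.sum_congr rfl fun x _ => ?_
    have := ih (fun b => f (Fin.cons x b)) (fun i => hf _)
    have ht : Fin.tail (fun _ : Fin (m + 1) => p) = fun _ => p := rfl
    rw [ht, this, ← Real.rpow_mul (Finset.sum_nonneg fun i _ => Real.rpow_nonneg (hf _) _),
      one_div_mul_cancel hp.ne', Real.rpow_one]

lemma minkowski_sum {α β : Type*} [Fintype α] (S : Finset β) {r : ℝ} (hr : 1 ≤ r)
    (h : β → α → ℝ) (hh : ∀ b x, 0 ≤ h b x) :
    (∑ x, (∑ b ∈ S, h b x) ^ r) ^ (1 / r) ≤ ∑ b ∈ S, (∑ x, h b x ^ r) ^ (1 / r) := by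
  classical
  induction S using Finset.induction_on with
  | empty =>
    simp only [Finset.sum_empty]
    rw [Real.zero_rpow (by linarith), Finset.sum_const_zero, Real.zero_rpow (by positivity)]
  | insert b S hb ih =>
    simp only [Finset.sum_insert hb]
    refine (Real.Lp_add_le_of_nonneg Finset.univ hr (fun x _ => hh b x)
      (fun x _ => Finset.sum_nonneg fun b _ => hh b x)).trans ?_
    gcongr

lemma minkowski_mixed {α β : Type*} [Fintype α] [Fintype β] {p : ℝ} (hp : 0 < p) (hp2 : p ≤ 2)
    (f : α → β → ℝ) (hf : ∀ x b, 0 ≤ f x b) :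
    (∑ x, ((∑ b, f x b ^ p) ^ (1 / p)) ^ (2 : ℝ)) ^ (1 / (2 : ℝ)) ≤
      (∑ b, (∑ x, f x b ^ (2 : ℝ)) ^ (p / 2)) ^ (1 / p) := by
  have hr : 1 ≤ 2 / p := by rw [le_div_iff₀ hp]; linarith
  have key := minkowski_sum Finset.univ hr (fun b x => f x b ^ p)
    (fun b x => Real.rpow_nonneg (hf x b) _)
  have hL0 : 0 ≤ (∑ x, (∑ b, f x b ^ p) ^ (2 / p)) :=
    Finset.sum_nonneg fun x _ => Real.rpow_nonneg (Finset.sum_nonneg fun b _ =>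
      Real.rpow_nonneg (hf x b) _) _
  have key2 := Real.rpow_le_rpow (Real.rpow_nonneg hL0 _) key (by positivity : 0 ≤ 1 / p)
  rw [← Real.rpow_mul hL0] at key2
  have e1 : 1 / (2 / p) * (1 / p) = 1 / 2 := by field_simp
  rw [e1] at key2
  have e2 : ∀ x, ((∑ b, f x b ^ p) ^ (1 / p)) ^ (2 : ℝ) = (∑ b, f x b ^ p) ^ (2 / p) := fun x => by
    rw [← Real.rpow_mul (Finset.sum_nonneg fun b _ => Real.rpow_nonneg (hf x b) _)]
    congr 1; ring
  have e3 : ∀ b x, (f x b ^ p) ^ (2 / p) = f x b ^ (2 : ℝ) := fun b x => by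
    rw [← Real.rpow_mul (hf x b)]; congr 1; field_simp
  have e4 : 1 / (2 / p) = p / 2 := by field_simp
  simp only [e3, e4] at key2
  simp only [e2]
  exact key2

lemma mn_update {ι : Type*} [Fintype ι] {p : ℝ} (hp : 0 < p) (hp2 : p ≤ 2) (m : ℕ)
    (k : Fin (m + 1)) (f : (Fin (m + 1) → ι) → ℝ) (hf : ∀ i, 0 ≤ f i) :
    mn (m + 1) (Function.update (fun _ => p) k 2) f ≤
      (∑ b : Fin m → ι, (∑ x, f (k.insertNth x b) ^ (2 : ℝ)) ^ (p / 2)) ^ (1 / p) := by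
  induction m with
  | zero =>
    obtain rfl : k = 0 := Fin.fin_one_eq_zero k
    rw [mn]
    have ht : Fin.tail (Function.update (fun _ : Fin 1 => p) 0 2) = fun _ => p := by
      ext j; exact j.elim0
    rw [ht, Function.update_self]
    simp only [mn_const hp _ _ (fun i => hf _)]
    simp only [Fin.insertNth_zero']
    exact minkowski_mixed hp hp2 (fun x b => f (Fin.cons x b)) (fun x b => hf _)
  | succ m ih =>
    refine Fin.cases ?_ (fun j => ?_) k
    · rw [mn]
      have ht : Fin.tail (Function.update (fun _ : Fin (m + 1 + 1) => p) 0 2) = fun _ => p := by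
        ext j; simp [Fin.tail]
      rw [ht, Function.update_self]
      simp only [mn_const hp _ _ (fun i => hf _)]
      simp only [Fin.insertNth_zero']
      exact minkowski_mixed hp hp2 (fun x b => f (Fin.cons x b)) (fun x b => hf _)
    · rw [mn]
      have ht : Fin.tail (Function.update (fun _ : Fin (m + 1 + 1) => p) j.succ 2)
          = Function.update (fun _ => p) j 2 := by
        rw [Fin.tail_update_succ]; rfl
      have h0 : Function.update (fun _ : Fin (m + 1 + 1) => p) j.succ 2 0 = p :=
        Function.update_of_ne (Fin.succ_ne_zero j).symm _ _
      rw [ht, h0, sum_cons_split]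
      refine Real.rpow_le_rpow (Finset.sum_nonneg fun x _ => Real.rpow_nonneg
        (mn_nonneg _ _ _ fun i => hf _) _) (Finset.sum_le_sum fun y _ => ?_) (by positivity)
      refine (Real.rpow_le_rpow (mn_nonneg _ _ _ fun i => hf _)
        (ih j (fun b => f (Fin.cons y b)) (fun i => hf _)) hp.le).trans ?_
      rw [← Real.rpow_mul (Finset.sum_nonneg fun b _ => Real.rpow_nonneg (Finset.sum_nonneg
        fun x _ => Real.rpow_nonneg (hf _) _) _), one_div_mul_cancel hp.ne', Real.rpow_one]
      simp only [Fin.insertNth_succ_cons]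
      exact le_rfl

lemma blei {ι : Type*} [Fintype ι] (m : ℕ) (hm : 0 < m) (f : (Fin (m + 1) → ι) → ℝ)
    (hf : ∀ i, 0 ≤ f i) (R : ℝ) (hR : 0 ≤ R) {p : ℝ} (hp : p = 2 * m / (m + 1))
    (h : ∀ k : Fin (m + 1),
      (∑ b : Fin m → ι, (∑ x, f (k.insertNth x b) ^ (2 : ℝ)) ^ (p / 2)) ^ (1 / p) ≤ R) :
    (∑ i, f i ^ (2 * (m + 1 : ℝ) / (m + 1 + 1))) ^ ((m + 1 + 1 : ℝ) / (2 * (m + 1))) ≤ R := by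
  have hm' : (0 : ℝ) < m := by exact_mod_cast hm
  have hp0 : 0 < p := by rw [hp]; positivity
  have hp2 : p ≤ 2 := by rw [hp, div_le_iff₀ (by positivity)]; linarith
  set q : ℝ := 2 * (m + 1 : ℝ) / (m + 1 + 1) with hq
  have hq0 : 0 < q := by rw [hq]; positivity
  have hq1 : (m + 1 + 1 : ℝ) / (2 * (m + 1)) = 1 / q := by rw [hq]; field_simp
  rw [hq1, ← mn_const hq0 _ f hf]
  have hw1 : ∑ _k : Fin (m + 1), (1 / (m + 1) : ℝ) = 1 := by
    simp; field_simp
  refine (mn_holder (fun _ : Fin (m + 1) => (1 / (m + 1) : ℝ)) (fun _ => by positivity) hw1 (m + 1)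
    (fun _ => q) (fun _ => hq0) (fun k => Function.update (fun _ => p) k 2) ?_ ?_ f hf).trans ?_
  · intro k j
    rcases eq_or_ne j k with rfl | hjk
    · simp
    · simp [Function.update_of_ne hjk, hp0]
  · intro j
    have : ∀ k : Fin (m + 1), (1 / (m + 1) : ℝ) / Function.update (fun _ => p) k 2 j =
        (1 / (m + 1) : ℝ) / p + if k = j then (1 / (m + 1) : ℝ) / 2 - (1 / (m + 1) : ℝ) / p else 0 := by
      intro k
      rcases eq_or_ne j k with rfl | hjk
      · simp
      · simp [Function.update_of_ne hjk, hjk.symm]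
    simp only [this, Finset.sum_add_distrib, Finset.sum_ite_eq', Finset.mem_univ, if_true,
      Finset.sum_const, Finset.card_univ, Fintype.card_fin, nsmul_eq_mul]
    rw [hq, hp]; push_cast; field_simp; ring
  · calc ∏ k, mn (m + 1) (Function.update (fun _ => p) k 2) f ^ (1 / (m + 1) : ℝ)
        ≤ ∏ _k : Fin (m + 1), R ^ (1 / (m + 1) : ℝ) := by
          refine Finset.prod_le_prod (fun k _ => Real.rpow_nonneg (mn_nonneg _ _ _ hf) _)
            fun k _ => ?_
          exact Real.rpow_le_rpow (mn_nonneg _ _ _ hf)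
            ((mn_update hp0 hp2 m k f hf).trans (h k)) (by positivity)
      _ = R := by
          rw [← Real.rpow_sum_of_nonneg hR (fun k _ => by positivity), hw1, Real.rpow_one]
lemma single_insertNth {m N : ℕ} (k : Fin (m + 1)) (x : Fin N) (b : Fin m → Fin N) :
    (fun j => (Pi.single ((k.insertNth x b : Fin (m + 1) → Fin N) j) (1 : ℂ) : Fin N → ℂ)) =
      k.insertNth (Pi.single x (1 : ℂ)) (fun j => (Pi.single (b j) (1 : ℂ) : Fin N → ℂ)) := by
  funext j
  refine Fin.succAboveCases k ?_ (fun j => ?_) j <;> simp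

lemma rs_eq {m N : ℕ} (U : ContinuousMultilinearMap ℂ (fun _ : Fin (m + 1) => (Fin N → ℂ)) ℂ)
    (k : Fin (m + 1)) (b : Fin m → Fin N) (ε : Fin N → Fin 5) :
    rs (fun x => U (fun j => Pi.single ((k.insertNth x b : Fin (m + 1) → Fin N) j) (1 : ℂ))) ε =
      U.curryMid k (fun x => zt (ε x)) (fun j => Pi.single (b j) (1 : ℂ)) := by
  have hz : (fun x => zt (ε x)) = ∑ x, zt (ε x) • (Pi.single x (1 : ℂ) : Fin N → ℂ) := by
    funext y
    simp [Finset.sum_apply, Pi.single_apply]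
  rw [hz, map_sum]
  simp only [rs, map_smul, ContinuousMultilinearMap.sum_apply, ContinuousMultilinearMap.smul_apply,
    ContinuousMultilinearMap.curryMid_apply, single_insertNth, smul_eq_mul]
  exact Finset.sum_congr rfl fun x _ => mul_comm _ _

lemma curryMid_norm {m N : ℕ}
    (U : ContinuousMultilinearMap ℂ (fun _ : Fin (m + 1) => (Fin N → ℂ)) ℂ)
    (k : Fin (m + 1)) (ε : Fin N → Fin 5) : ‖U.curryMid k (fun x => zt (ε x))‖ ≤ ‖U‖ := by
  have h1 := (U.curryMid k).le_opNorm (fun x => zt (ε x))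
  have h2 : ‖U.curryMid k‖ ≤ ‖U‖ := le_of_eq (ContinuousMultilinearMap.norm_curryMid k U)
  have h3 : ‖(fun x => zt (ε x))‖ ≤ 1 :=
    (pi_norm_le_iff_of_nonneg zero_le_one).mpr fun x => (zt_norm _).le
  calc _ ≤ _ := h1
    _ ≤ ‖U‖ * 1 := by gcongr
    _ = ‖U‖ := mul_one _

lemma bh_step (m : ℕ) (hm : 0 < m) (B g : ℝ) (hB : 0 ≤ B) (hg : 0 < g)
    (hBH : ∀ N (U : ContinuousMultilinearMap ℂ (fun _ : Fin m => (Fin N → ℂ)) ℂ),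
      BHcomplex m N U ≤ B * ‖U‖)
    (hk : ∀ N (a : Fin N → ℂ), g * (∑ i, ‖a i‖ ^ 2) ^ ((m : ℝ) / (m + 1)) ≤
      (5 ^ N)⁻¹ * ∑ ε, (‖rs a ε‖ ^ 2) ^ ((m : ℝ) / (m + 1))) (N : ℕ)
    (U : ContinuousMultilinearMap ℂ (fun _ : Fin (m + 1) => (Fin N → ℂ)) ℂ) :
    BHcomplex (m + 1) N U ≤ B * (g⁻¹) ^ ((m + 1 : ℝ) / (2 * m)) * ‖U‖ := by
  have hm' : (0 : ℝ) < m := by exact_mod_cast hm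
  unfold BHcomplex
  push_cast
  refine blei m hm (fun i => ‖U (fun k => Pi.single (i k) (1 : ℂ))‖) (fun i => norm_nonneg _) _
    (by positivity) rfl fun k => ?_
  have hs : (2 * m / (m + 1) : ℝ) / 2 = m / (m + 1) := by ring
  have hp1 : 1 / (2 * m / (m + 1) : ℝ) = (m + 1) / (2 * m) := by field_simp
  rw [hs, hp1]
  set s : ℝ := (m : ℝ) / (m + 1) with hsdef
  have hs0 : 0 < s := by positivity
  have key : ∑ b : Fin m → Fin N, (∑ x, ‖U (fun j => Pi.single
      ((k.insertNth x b : Fin (m + 1) → Fin N) j) (1 : ℂ))‖ ^ (2 : ℝ)) ^ s ≤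
      g⁻¹ * (B * ‖U‖) ^ (2 * s) := by
    have h1 : ∀ b : Fin m → Fin N, (∑ x, ‖U (fun j => Pi.single
      ((k.insertNth x b : Fin (m + 1) → Fin N) j) (1 : ℂ))‖ ^ (2 : ℝ)) ^ s ≤
      g⁻¹ * ((5 ^ N)⁻¹ * ∑ ε : Fin N → Fin 5, ‖U.curryMid k (fun x => zt (ε x))
        (fun j => Pi.single (b j) (1 : ℂ))‖ ^ (2 * s)) := by
      intro b
      have h := hk N (fun x => U (fun j => Pi.single
        ((k.insertNth x b : Fin (m + 1) → Fin N) j) (1 : ℂ)))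
      simp only [rs_eq] at h
      rw [le_inv_mul_iff₀ hg]
      simp only [Real.rpow_two]
      refine h.trans (le_of_eq ?_)
      congr 1
      refine Finset.sum_congr rfl fun ε _ => ?_
      rw [← Real.rpow_two, ← Real.rpow_mul (norm_nonneg _)]
    refine (Finset.sum_le_sum fun b _ => h1 b).trans ?_
    rw [← Finset.mul_sum, ← Finset.mul_sum, Finset.sum_comm]
    refine mul_le_mul_of_nonneg_left ?_ (by positivity)
    rw [inv_mul_le_iff₀ (by positivity)]
    have h2 : ∀ ε : Fin N → Fin 5, ∑ b : Fin m → Fin N, ‖U.curryMid k (fun x => zt (ε x))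
        (fun j => Pi.single (b j) (1 : ℂ))‖ ^ (2 * s) ≤ (B * ‖U‖) ^ (2 * s) := by
      intro ε
      have h3 := hBH N (U.curryMid k (fun x => zt (ε x)))
      unfold BHcomplex at h3
      have h4 : B * ‖U.curryMid k (fun x => zt (ε x))‖ ≤ B * ‖U‖ :=
        mul_le_mul_of_nonneg_left (curryMid_norm U k ε) hB
      have e1 : (2 * m : ℝ) / (m + 1) = 2 * s := by rw [hsdef]; ring
      have e2 : (m + 1 : ℝ) / (2 * m) = (2 * s)⁻¹ := by rw [hsdef]; field_simp
      rw [e1, e2] at h3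
      exact (Real.rpow_inv_le_iff_of_pos (Finset.sum_nonneg fun i _ =>
        Real.rpow_nonneg (norm_nonneg _) _) (by positivity) (by positivity)).mp (h3.trans h4)
    refine (Finset.sum_le_sum fun ε _ => h2 ε).trans (le_of_eq ?_)
    simp
  refine (Real.rpow_le_rpow (Finset.sum_nonneg fun b _ => Real.rpow_nonneg (Finset.sum_nonneg
    fun x _ => Real.rpow_nonneg (norm_nonneg _) _) _) key (by positivity)).trans (le_of_eq ?_)
  rw [Real.mul_rpow (by positivity) (by positivity), ← Real.rpow_mul (by positivity)]
  have : 2 * s * ((m + 1 : ℝ) / (2 * m)) = 1 := by rw [hsdef]; field_simp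
  rw [this, Real.rpow_one]
  ring

lemma bh_one (N : ℕ) (U : ContinuousMultilinearMap ℂ (fun _ : Fin 1 => (Fin N → ℂ)) ℂ) :
    BHcomplex 1 N U ≤ exp 0 * ‖U‖ := by
  unfold BHcomplex
  norm_num
  rw [sum_cons_split 0 (fun i => ‖U (fun k => Pi.single (i k) (1 : ℂ))‖)]
  have h1 : ∀ x : Fin N, ∑ b : Fin 0 → Fin N, ‖U (fun k => Pi.single
      ((Fin.cons x b : Fin 1 → Fin N) k) (1 : ℂ))‖ = ‖U (fun _ => Pi.single x (1 : ℂ))‖ := by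
    intro x
    rw [Finset.univ_unique, Finset.sum_singleton]
    congr 2
    funext k
    rw [Fin.fin_one_eq_zero k, Fin.cons_zero]
  simp only [h1]
  set u : Fin N → ℂ := fun x => U (fun _ => Pi.single x (1 : ℂ)) with hu
  set z : Fin N → ℂ := fun x => (starRingEnd ℂ (u x)) / ‖u x‖ with hz
  have hzn : ‖z‖ ≤ 1 := (pi_norm_le_iff_of_nonneg zero_le_one).mpr fun x => by
    simp only [hz, norm_div, RCLike.norm_conj, Complex.norm_real, norm_norm]
    exact div_self_le_one _
  have hzs : z = ∑ x, z x • (Pi.single x (1 : ℂ) : Fin N → ℂ) := by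
    funext y
    simp [Finset.sum_apply, Pi.single_apply]
  have hlin : U (fun _ => z) = ∑ x, z x * u x := by
    have hc : ∀ v : Fin N → ℂ, U (fun _ => v) = U.toMultilinearMap.toLinearMap (fun _ => 0) 0 v := by
      intro v
      rw [MultilinearMap.toLinearMap_apply]
      change U _ = U _
      refine congrArg U ?_
      funext k
      rw [Fin.fin_one_eq_zero k, Function.update_self]
    rw [hc, hzs, map_sum]
    refine Finset.sum_congr rfl fun x _ => ?_
    rw [map_smul, ← hc, smul_eq_mul, ← hzs]
  have hval : ∑ x, z x * u x = ((∑ x, ‖u x‖ : ℝ) : ℂ) := by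
    push_cast
    refine Finset.sum_congr rfl fun x _ => ?_
    simp only [hz]
    rw [div_mul_eq_mul_div, Complex.conj_mul']
    by_cases h : u x = 0
    · simp [h]
    · have : (‖u x‖ : ℂ) ≠ 0 := by exact_mod_cast norm_ne_zero_iff.mpr h
      field_simp
  have hle := U.le_opNorm (fun _ => z)
  rw [hlin, hval, Complex.norm_real, Real.norm_of_nonneg
    (Finset.sum_nonneg fun x _ => norm_nonneg _)] at hle
  refine hle.trans ?_
  simp only [Finset.prod_const, Finset.card_univ, Fintype.card_fin, pow_one]
  exact mul_le_of_le_one_right (norm_nonneg _) hzn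

/-- The Bohnenblust--Hille inequality with constant `exp L`. -/
def HB (m : ℕ) (L : ℝ) : Prop :=
  ∀ N (U : ContinuousMultilinearMap ℂ (fun _ : Fin m => (Fin N → ℂ)) ℂ),
    BHcomplex m N U ≤ exp L * ‖U‖

lemma HB.mono {m : ℕ} {L L' : ℝ} (h : HB m L) (hL : L ≤ L') : HB m L' := fun N U =>
  (h N U).trans (mul_le_mul_of_nonneg_right (Real.exp_le_exp.mpr hL) (norm_nonneg _))

lemma HB.step {m : ℕ} (hm : 0 < m) {L g : ℝ} (h : HB m L) (hg : 0 < g)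
    (hk : ∀ N (a : Fin N → ℂ), g * (∑ i, ‖a i‖ ^ 2) ^ ((m : ℝ) / (m + 1)) ≤
      (5 ^ N)⁻¹ * ∑ ε, (‖rs a ε‖ ^ 2) ^ ((m : ℝ) / (m + 1))) :
    HB (m + 1) (L - log g * ((m + 1 : ℝ) / (2 * m))) := by
  intro N U
  have := bh_step m hm (exp L) g (exp_pos L).le hg h hk N U
  rw [Real.rpow_def_of_pos (inv_pos.mpr hg), Real.log_inv, ← Real.exp_add] at this
  convert this using 3
  ring

lemma HB.step_gen {m : ℕ} (hm : 0 < m) {L : ℝ} (h : HB m L) : HB (m + 1) (L + 0.2595 / m) := by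
  have hm' : (0 : ℝ) < m := by exact_mod_cast hm
  have hs0 : 0 < (m : ℝ) / (m + 1) := by positivity
  have hs1 : (m : ℝ) / (m + 1) < 1 := by rw [div_lt_one (by positivity)]; linarith
  have hE := exp_pos (-(1 - (m : ℝ) / (m + 1)) * 0.519)
  have hd : 0 < 1 - (m : ℝ) / (m + 1) := by linarith
  have hEd := mul_pos hE hd
  refine (h.step hm hE (khin (q1 := _) hs0 (by positivity) (minor_gen hs0 hs1) ?_ ?_)).mono ?_
  · generalize exp (-(1 - (m : ℝ) / (m + 1)) * 0.519) * (1 - (m : ℝ) / (m + 1)) = c at *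
    nlinarith [sq_nonneg c]
  · nlinarith
  · rw [Real.log_exp]
    apply le_of_eq
    field_simp
    ring

lemma HB_two : HB 2 0.22634 := by
  have h1 : HB 1 0 := bh_one
  have e : ((1 : ℕ) : ℝ) / ((1 : ℕ) + 1) = 1 / 2 := by norm_num
  refine (h1.step one_pos (g := 0.7975) (by norm_num) ?_).mono ?_
  · rw [e]
    exact khin (by norm_num) (by norm_num) minor_two (by norm_num) (by norm_num)
  · have hl2 : log 2 < 0.6931471808 := Real.log_two_lt_d9
    have : log ((0.7975⁻¹ : ℝ) ^ 49) ≤ log (2 ^ 16) := Real.log_le_log (by positivity) (by norm_num)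
    rw [Real.log_pow, Real.log_pow, Real.log_inv] at this
    push_cast at this ⊢
    linarith

lemma HB_three : HB 3 0.3445 := by
  have e : ((2 : ℕ) : ℝ) / ((2 : ℕ) + 1) = 2 / 3 := by norm_num
  refine (HB_two.step two_pos (g := 0.8545) (by norm_num) ?_).mono ?_
  · rw [e]
    exact khin (by norm_num) (by norm_num) minor_three (by norm_num) (by norm_num)
  · have hl2 : log 2 < 0.6931471808 := Real.log_two_lt_d9
    have : log ((0.8545⁻¹ : ℝ) ^ 22) ≤ log (2 ^ 5) := Real.log_le_log (by positivity) (by norm_num)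
    rw [Real.log_pow, Real.log_pow, Real.log_inv] at this
    push_cast at this ⊢
    linarith

lemma HB_nine : HB 9 (log 1.02960973695 + 0.304975 * log 8) := by
  have h4 := HB_three.step_gen (by norm_num)
  have h5 := h4.step_gen (by norm_num)
  have h6 := h5.step_gen (by norm_num)
  have h7 := h6.step_gen (by norm_num)
  have h8 := h7.step_gen (by norm_num)
  have h9 := h8.step_gen (by norm_num)
  refine h9.mono ?_
  have e8 : log 8 = 3 * log 2 := by
    rw [show (8 : ℝ) = 2 ^ 3 by norm_num, Real.log_pow]; norm_num
  have hl2 : 0.6931471803 < log 2 := Real.log_two_gt_d9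
  have hc := Real.one_sub_inv_le_log_of_pos (by norm_num : (0 : ℝ) < 1.02960973695)
  rw [e8]
  norm_num at hc ⊢
  linarith

lemma HB_all (n : ℕ) (hn : 9 ≤ n) :
    HB n (log 1.02960973695 + 0.304975 * log ((n : ℝ) - 1)) := by
  induction n, hn using Nat.le_induction with
  | base => convert HB_nine using 4; norm_num
  | succ n hn ih =>
    refine (ih.step_gen (by omega)).mono ?_
    have hn' : (9 : ℝ) ≤ n := by exact_mod_cast hn
    have hpos : (0 : ℝ) < n := by linarith
    have h := Real.log_le_sub_one_of_pos (div_pos (by linarith : (0 : ℝ) < (n : ℝ) - 1) hpos)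
    rw [Real.log_div (by linarith) (by linarith), sub_div, div_self hpos.ne'] at h
    push_cast
    rw [add_sub_cancel_right]
    have e : (0.2595 : ℝ) / n = 0.2595 * (1 / n) := by ring
    have h1 : (0 : ℝ) < 1 / n := by positivity
    rw [e]
    linarith

theorem stmt9 (n : ℕ) (hn : 2 ^ 3 < n) (N : ℕ) (hN : 0 < N)
    (U : ContinuousMultilinearMap ℂ (fun _ : Fin n => (Fin N → ℂ)) ℂ) :
    BHcomplex n N U ≤ 1.02960973695 * ((n : ℝ) - 1) ^ (0.304975 : ℝ) * ‖U‖ := by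
  have hn9 : 9 ≤ n := by omega
  have hn' : (9 : ℝ) ≤ n := by exact_mod_cast hn9
  have h := HB_all n hn9 N U
  rw [Real.exp_add, Real.exp_log (by norm_num)] at h
  rw [Real.rpow_def_of_pos (by linarith), mul_comm (log _)]
  exact h
end

section
/- For every integer n > 2^5 = 32, every positive integer N, and every n-linear form U : (ℂ^N)^n → ℂ, one has (∑_{i₁,…,iₙ=1}^N |U(e_{i₁},…,e_{iₙ})|^{2n/(n+1)})^{(n+1)/(2n)} ≤ 1.00123230777 · (n-1)^{0.304975} · ‖U‖. -/
open Real

open scoped NNReal ENNReal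

theorem bh_holderN {ι α : Type*} [Fintype ι] [Fintype α] (f : ι → α → ℝ≥0) (w : ι → ℝ)
    (hw : ∀ k, 0 ≤ w k) (hs : ∑ k, w k = 1) :
    ∑ x, ∏ k, (f k x) ^ (w k) ≤ ∏ k, (∑ x, f k x) ^ (w k) := by
  let _ : MeasurableSpace α := ⊤
  have h := ENNReal.lintegral_prod_norm_pow_le (μ := (MeasureTheory.Measure.count : MeasureTheory.Measure α))
    (Finset.univ : Finset ι) (f := fun k x => (f k x : ℝ≥0∞)) (fun i _ => (Measurable.of_discrete).aemeasurable)
    (p := w) hs (fun i _ => hw i)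
  simp only [MeasureTheory.lintegral_count, tsum_fintype] at h
  have e1 : ∀ k x, ((f k x : ℝ≥0∞)) ^ (w k) = ((f k x ^ (w k) : ℝ≥0) : ℝ≥0∞) := fun k x =>
    (ENNReal.coe_rpow_of_nonneg _ (hw k)).symm
  have e2 : ∀ k, (∑ x, (f k x : ℝ≥0∞)) ^ (w k) = (((∑ x, f k x) ^ (w k) : ℝ≥0) : ℝ≥0∞) := fun k => by
    rw [ENNReal.coe_rpow_of_nonneg _ (hw k)]; push_cast; rfl
  simp only [e1, e2] at h
  exact_mod_cast h

theorem bh_holder2 {α : Type*} [Fintype α] (f g : α → ℝ≥0) (l : ℝ) (h0 : 0 ≤ l) (h1 : l ≤ 1) :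
    ∑ x, f x ^ l * g x ^ (1 - l) ≤ (∑ x, f x) ^ l * (∑ x, g x) ^ (1 - l) := by
  have := bh_holderN (ι := Fin 2) ![f, g] ![l, 1 - l] (by
    intro k; fin_cases k
    · exact h0
    · simpa using h1) (by simp [Fin.sum_univ_two])
  simpa [Fin.prod_univ_two] using this

theorem bh_sum_cons {m : ℕ} {α : Type*} [Fintype α] (F : (Fin (m + 1) → α) → ℝ≥0) (k : Fin (m+1)) :
    ∑ i, F i = ∑ j : Fin m → α, ∑ x, F (k.insertNth x j) := by
  classical
  rw [Finset.sum_comm, ← Fintype.sum_prod_type']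
  exact (Fintype.sum_equiv (Fin.insertNthEquiv (fun _ => α) k) _ _ (fun p => rfl)).symm

/-- Loomis--Whitney -/
theorem bh_LW {α : Type*} [Fintype α] (m : ℕ) : ∀ g : Fin (m + 2) → (Fin (m + 1) → α) → ℝ≥0,
    ∑ i : Fin (m + 2) → α, ∏ k, (g k (k.removeNth i)) ^ (1 / ((m : ℝ) + 1)) ≤
      ∏ k, (∑ j, g k j) ^ (1 / ((m : ℝ) + 1)) := by
  induction m with
  | zero =>
    intro g
    simp only [Nat.cast_zero, zero_add, div_one, NNReal.rpow_one]
    rw [bh_sum_cons _ 0, Fin.prod_univ_two, Finset.sum_mul_sum]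
    apply le_of_eq
    refine Finset.sum_congr rfl fun j _ => ?_
    rw [← Fintype.sum_equiv (Equiv.funUnique (Fin 1) α).symm (fun x => g 0 j * g 1 (fun _ => x)) (fun l => g 0 j * g 1 l)]
    · refine Finset.sum_congr rfl fun x _ => ?_
      rw [Fin.prod_univ_two]
      congr 2
      funext l
      fin_cases l
      simp [Fin.removeNth]
    · intro x; rfl
  | succ m ih =>
    intro g
    have hm : (0:ℝ) < (m:ℝ) + 1 := by positivity
    rw [bh_sum_cons _ 0]
    set e : ℝ := 1 / (((m+1 : ℕ) : ℝ) + 1) with he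
    have he0 : 0 ≤ e := by positivity
    have he1 : e ≤ 1 := by
      rw [he, div_le_one (by positivity)]; push_cast; linarith
    let h : Fin (m+2) → (Fin (m+1) → α) → ℝ≥0 := fun k l => ∑ x, g k.succ (Fin.cons x l)
    have step : ∀ j : Fin (m + 2) → α,
        ∑ x, ∏ k, (g k (k.removeNth ((0 : Fin (m+3)).insertNth x j : Fin (m+3) → α))) ^ e ≤
          (g 0 j) ^ e * (∏ k : Fin (m+2), (h k (k.removeNth j)) ^ (1 / ((m:ℝ) + 1))) ^ (1 - e) := by
      intro j
      have h1 : ∀ x, ∏ k, (g k (k.removeNth ((0 : Fin (m+3)).insertNth x j : Fin (m+3) → α))) ^ e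
          = (g 0 j) ^ e * ∏ k : Fin (m+2), (g k.succ (Fin.cons x (k.removeNth j))) ^ e := by
        intro x
        rw [Fin.prod_univ_succ]
        congr 1
        refine Finset.prod_congr rfl fun k _ => ?_
        congr 2
        funext l
        refine Fin.cases ?_ (fun l => ?_) l
        · simp [Fin.removeNth]
        · simp [Fin.removeNth]
      simp only [h1, ← Finset.mul_sum]
      gcongr
      refine (bh_holderN (fun (k : Fin (m+2)) x => g k.succ (Fin.cons x (k.removeNth j))) (fun _ => e)
        (fun _ => he0) ?_).trans ?_
      · simp [he]; field_simp; ring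
      · rw [← NNReal.finsetProd_rpow]
        apply le_of_eq
        refine Finset.prod_congr rfl fun k _ => ?_
        rw [← NNReal.rpow_mul]
        congr 1
        rw [he]; push_cast; field_simp; ring
    refine (Finset.sum_le_sum fun j _ => step j).trans ?_
    refine (bh_holder2 _ _ e he0 he1).trans ?_
    rw [Fin.prod_univ_succ]
    gcongr
    refine (NNReal.rpow_le_rpow (ih h) (by linarith)).trans ?_
    rw [← NNReal.finsetProd_rpow]
    apply le_of_eq
    refine Finset.prod_congr rfl fun k _ => ?_
    rw [← NNReal.rpow_mul]
    have : ∑ j, h k j = ∑ j, g k.succ j := by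
      rw [bh_sum_cons (fun j => g k.succ j) 0]
      simp [h]
    rw [this]
    congr 1
    rw [he]; push_cast; field_simp; ring

theorem bh_blei {α : Type*} [Fintype α] (m : ℕ) (β : (Fin (m + 2) → α) → ℝ≥0) (T : ℝ≥0)
    (hT : ∀ k : Fin (m+2), ∑ j : Fin (m+1) → α, (∑ x, β (k.insertNth x j)) ^ (((m:ℝ)+1)/(m+2)) ≤ T) :
    ∑ i, (β i) ^ (((m:ℝ)+2)/(m+3)) ≤ T ^ (((m:ℝ)+2)^2/((m+1)*(m+3))) := by
  have hm : (0:ℝ) < (m:ℝ) + 1 := by positivity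
  have hm2 : (0:ℝ) < (m:ℝ) + 2 := by positivity
  have hm3 : (0:ℝ) < (m:ℝ) + 3 := by positivity
  let A : Fin (m+2) → (Fin (m+1) → α) → ℝ≥0 := fun k j => ∑ x, β (k.insertNth x j)
  let S : Fin (m+2) → ℝ≥0 := fun k => ∑ j, (A k j) ^ (((m:ℝ)+1)/(m+2))
  set r : ℝ := 1/((m:ℝ)+2) with hr
  have hr0 : 0 < r := by positivity
  let X : (Fin (m + 2) → α) → ℝ≥0 := fun i => ∏ k, (β i * (A k (k.removeNth i)) ^ (-r)) ^ r
  let Y : (Fin (m + 2) → α) → ℝ≥0 := fun i => ∏ k, ((A k (k.removeNth i)) ^ (((m:ℝ)+1)/(m+2))) ^ (1/((m:ℝ)+1))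
  have hX : ∑ i, X i ≤ T := by
    refine (bh_holderN (fun k i => β i * (A k (k.removeNth i)) ^ (-r)) (fun _ => r) (fun _ => hr0.le) ?_).trans ?_
    · simp [hr]; field_simp
    · have : ∀ k : Fin (m+2), (∑ i, β i * (A k (k.removeNth i)) ^ (-r)) = S k := by
        intro k
        rw [bh_sum_cons _ k]
        refine Finset.sum_congr rfl fun j _ => ?_
        simp only [Fin.removeNth_insertNth]
        rw [← Finset.sum_mul]
        change A k j * A k j ^ (-r) = _
        by_cases h0 : A k j = 0
        · rw [h0, zero_mul, NNReal.zero_rpow]; positivity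
        · rw [← NNReal.rpow_one_add' _]
          · congr 1; rw [hr]; field_simp; ring
          · rw [hr]; field_simp; ring_nf; positivity
      simp only [this]
      calc ∏ k, S k ^ r ≤ ∏ k : Fin (m+2), T ^ r := Finset.prod_le_prod' fun k _ => NNReal.rpow_le_rpow (hT k) hr0.le
        _ = T := by
          rw [Finset.prod_const, ← NNReal.rpow_natCast, ← NNReal.rpow_mul]
          simp [hr]
          rw [inv_mul_cancel₀ hm2.ne']; simp
  have hY : ∑ i, Y i ≤ T ^ (((m:ℝ)+2)/(m+1)) := by
    refine (bh_LW m (fun k j => (A k j) ^ (((m:ℝ)+1)/(m+2)))).trans ?_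
    calc ∏ k, S k ^ (1/((m:ℝ)+1)) ≤ ∏ k : Fin (m+2), T ^ (1/((m:ℝ)+1)) :=
          Finset.prod_le_prod' fun k _ => NNReal.rpow_le_rpow (hT k) (by positivity)
        _ = _ := by
          rw [Finset.prod_const, ← NNReal.rpow_natCast, ← NNReal.rpow_mul]
          congr 1
          simp; ring
  have hXY : ∀ i, (β i) ^ (((m:ℝ)+2)/(m+3)) ≤ X i ^ (((m:ℝ)+2)/(m+3)) * Y i ^ (1 - ((m:ℝ)+2)/(m+3)) := by
    intro i
    by_cases hb : β i = 0
    · rw [hb, NNReal.zero_rpow]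
      · simp
      · positivity
    have hA : ∀ k, A k (k.removeNth i) ≠ 0 := by
      intro k h
      have := (Finset.sum_eq_zero_iff.1 h) (i k) (Finset.mem_univ _)
      rw [Fin.insertNth_self_removeNth] at this
      exact hb this
    apply le_of_eq
    simp only [X, Y]
    rw [← NNReal.finsetProd_rpow, ← NNReal.finsetProd_rpow, ← Finset.prod_mul_distrib]
    have : ∀ k : Fin (m+2), ((β i * A k (k.removeNth i) ^ (-r)) ^ r) ^ (((m:ℝ)+2)/(m+3)) *
        (((A k (k.removeNth i)) ^ (((m:ℝ)+1)/(m+2))) ^ (1/((m:ℝ)+1))) ^ (1 - ((m:ℝ)+2)/(m+3)) = (β i) ^ (1/((m:ℝ)+3)) := by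
      intro k
      simp only [NNReal.mul_rpow, ← NNReal.rpow_mul]
      rw [mul_assoc, ← NNReal.rpow_add (hA k)]
      have e1 : (-r * r * ((m + 2) / (m + 3)) + (m + 1) / (m + 2) * (1 / (m + 1)) * (1 - (m + 2) / (m + 3)) : ℝ) = 0 := by
        rw [hr]; field_simp; ring
      rw [e1, NNReal.rpow_zero, mul_one]
      congr 1
      rw [hr]; field_simp
    rw [Finset.prod_congr rfl fun k _ => this k, Finset.prod_const, ← NNReal.rpow_natCast, ← NNReal.rpow_mul]
    congr 1
    simp
    ring
  calc ∑ i, (β i) ^ (((m:ℝ)+2)/(m+3)) ≤ ∑ i, X i ^ (((m:ℝ)+2)/(m+3)) * Y i ^ (1 - ((m:ℝ)+2)/(m+3)) :=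
        Finset.sum_le_sum fun i _ => hXY i
    _ ≤ _ := bh_holder2 X Y _ (by positivity) (by rw [div_le_one hm3]; linarith)
    _ ≤ T ^ (((m:ℝ)+2)/(m+3)) * (T ^ (((m:ℝ)+2)/(m+1))) ^ (1 - ((m:ℝ)+2)/(m+3)) := by
        have : 0 ≤ 1 - ((m:ℝ)+2)/(m+3) := by
          rw [sub_nonneg, div_le_one hm3]; linarith
        gcongr
    _ = _ := by
        rw [← NNReal.rpow_mul, ← NNReal.rpow_add_of_nonneg]
        · congr 1; field_simp; ring
        · positivity
        · have : 0 ≤ 1 - ((m:ℝ)+2)/(m+3) := by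
            rw [sub_nonneg, div_le_one hm3]; linarith
          positivity

noncomputable def bhσ : MeasureTheory.Measure ℝ :=
  (ENNReal.ofReal (2 * π))⁻¹ • MeasureTheory.volume.restrict (Set.Ioc 0 (2 * π))

noncomputable def bhP (N : ℕ) : MeasureTheory.Measure (Fin N → ℝ) :=
  MeasureTheory.Measure.pi (fun _ => bhσ)

instance bhσ_prob : MeasureTheory.IsProbabilityMeasure bhσ := by
  constructor
  simp only [bhσ, MeasureTheory.Measure.smul_apply, MeasureTheory.Measure.restrict_apply MeasurableSet.univ,
    Set.univ_inter, Real.volume_Ioc, sub_zero, smul_eq_mul]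
  apply ENNReal.inv_mul_cancel
  · simp [Real.pi_pos]
  · exact ENNReal.ofReal_ne_top

instance bhP_prob (N : ℕ) : MeasureTheory.IsProbabilityMeasure (bhP N) := by
  unfold bhP; infer_instance

/-- the random point on the circle -/
noncomputable def bhz (t : ℝ) : ℂ := Complex.exp (t * Complex.I)

theorem bhz_norm (t : ℝ) : ‖bhz t‖ = 1 := Complex.norm_exp_ofReal_mul_I t

@[fun_prop]
theorem bhz_cont : Continuous bhz := by unfold bhz; fun_prop

theorem bh_sum_integrable (N : ℕ) (a : Fin N → ℂ) (F : ℂ → ℝ) (hF : Continuous F) (w : ℂ) :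
    MeasureTheory.Integrable (fun t : Fin N → ℝ => F (w + ∑ k, a k * bhz (t k))) (bhP N) := by
  obtain ⟨C, hC⟩ := (isCompact_closedBall (0:ℂ) (‖w‖ + ∑ k, ‖a k‖)).exists_bound_of_continuousOn hF.continuousOn
  refine MeasureTheory.Integrable.of_bound (C := C) (Continuous.aestronglyMeasurable (by fun_prop)) ?_
  refine Filter.Eventually.of_forall fun t => hC _ ?_
  rw [mem_closedBall_zero_iff]
  refine (norm_add_le _ _).trans ?_
  gcongr
  refine (norm_sum_le _ _).trans ?_
  simp [bhz_norm]

noncomputable def bhφ (z : ℂ) : ℝ := ‖z‖ ^ 2 * Real.log (‖z‖ ^ 2)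

@[fun_prop]
theorem bhφ_cont : Continuous bhφ := by
  have : bhφ = (fun x : ℝ => x * Real.log x) ∘ fun z : ℂ => ‖z‖ ^ 2 := rfl
  rw [this]
  exact Real.continuous_mul_log.comp (by fun_prop)

theorem bhσ_integral (F : ℂ → ℝ) : ∫ t, F (bhz t) ∂bhσ = Real.circleAverage F 0 1 := by
  unfold bhσ
  rw [MeasureTheory.integral_smul_measure, Real.circleAverage_def,
    intervalIntegral.integral_of_le (by positivity)]
  congr 1
  · rw [ENNReal.toReal_inv, ENNReal.toReal_ofReal (by positivity)]
  · simp [circleMap, bhz]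

noncomputable def bhM (x y : ℝ) : ℝ := (x + y) * Real.log (max x y) + 2 * min x y

theorem bhK_lt (w ζ : ℂ) (h : ‖ζ‖ < ‖w‖) :
    ∫ t, bhφ (w + ζ * bhz t) ∂bhσ = (‖w‖^2 + ‖ζ‖^2) * Real.log (‖w‖^2) + 2 * ‖ζ‖^2 := by
  have hw : w ≠ 0 := by rintro rfl; simp at h; linarith [norm_nonneg ζ]
  have hwp : 0 < ‖w‖ := norm_pos_iff.2 hw
  rw [bhσ_integral (fun u => bhφ (w + ζ * u))]
  let s : Set ℂ := {u | ‖ζ * u‖ < ‖w‖}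
  have hs : IsOpen s := isOpen_lt (by fun_prop) (by fun_prop)
  have hs0 : (0:ℂ) ∈ s := by simpa [s] using hw
  have hsl : ∀ u ∈ s, 1 + ζ / w * u ∈ Complex.slitPlane := by
    intro u hu
    apply Complex.mem_slitPlane_of_norm_lt_one
    rw [div_mul_eq_mul_div, norm_div, div_lt_one hwp]; exact hu
  let L : ℂ → ℂ := fun u => Complex.log (1 + ζ / w * u)
  have hLd : ∀ u ∈ s, HasDerivAt L (ζ / w / (1 + ζ / w * u)) u := by
    intro u hu
    have h1 : HasDerivAt (fun u : ℂ => 1 + ζ / w * u) (ζ/w) u := by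
      simpa using ((hasDerivAt_id u).const_mul (ζ/w)).const_add 1
    exact h1.clog (hsl u hu)
  have hLdiff : DifferentiableOn ℂ L s := fun u hu => (hLd u hu).differentiableAt.differentiableWithinAt
  have hDS : DifferentiableOn ℂ (dslope L 0) s :=
    (Complex.differentiableOn_dslope (hs.mem_nhds hs0)).2 hLdiff
  let c : ℂ := ((Real.log (‖w‖^2) : ℝ) : ℂ)
  let H : ℂ → ℂ := fun u => c * ((‖w‖^2 + ‖ζ‖^2 : ℝ) + 2 * (starRingEnd ℂ w) * ζ * u) +
    2 * ((starRingEnd ℂ w) * (w + ζ * u) * L u + (starRingEnd ℂ ζ) * (w + ζ * u) * dslope L 0 u)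
  have hHd : DifferentiableOn ℂ H s := by
    have l1 : DifferentiableOn ℂ (fun u : ℂ => w + ζ * u) s := by fun_prop
    have l2 : DifferentiableOn ℂ (fun u : ℂ => c * ((‖w‖^2 + ‖ζ‖^2 : ℝ) + 2 * (starRingEnd ℂ w) * ζ * u)) s := by fun_prop
    exact l2.add ((((l1.const_mul _).mul hLdiff).add ((l1.const_mul _).mul hDS)).const_mul 2)
  have hball : Metric.closedBall (0:ℂ) 1 ⊆ s := by
    intro u hu
    rw [mem_closedBall_zero_iff] at hu
    simp only [s, Set.mem_ofPred_eq, norm_mul]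
    nlinarith [norm_nonneg ζ, norm_nonneg u]
  have hav : Real.circleAverage H 0 1 = H 0 := by
    apply DiffContOnCl.circleAverage
    rw [abs_one]
    exact hHd.diffContOnCl_ball hball
  have hcont : ContinuousOn H (Metric.sphere 0 |1|) := by
    rw [abs_one]; exact (hHd.continuousOn).mono (Metric.sphere_subset_closedBall.trans hball)
  have hre : Real.circleAverage (fun u => bhφ (w + ζ * u)) 0 1 = (H 0).re := by
    rw [← hav]
    have := Complex.reCLM.circleAverage_comp_comm (hcont.circleIntegrable')
    rw [Complex.reCLM_apply] at this
    rw [← this]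
    apply Real.circleAverage_congr_sphere
    intro u hu
    rw [abs_one, mem_sphere_zero_iff_norm] at hu
    have hus : u ∈ s := hball (by rw [mem_closedBall_zero_iff, hu])
    have hu0 : u ≠ 0 := by rintro rfl; simp at hu
    have huu : u * (starRingEnd ℂ u) = 1 := by rw [Complex.mul_conj, Complex.normSq_eq_norm_sq, hu]; simp
    have hne : 1 + ζ / w * u ≠ 0 := Complex.slitPlane_ne_zero (hsl u hus)
    have hz : w + ζ * u = w * (1 + ζ/w*u) := by field_simp
    simp only [Function.comp_apply, Complex.reCLM_apply]
    have hlog : Real.log (‖w + ζ * u‖^2) = Real.log (‖w‖^2) + 2 * (L u).re := by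
      rw [hz, norm_mul, mul_pow, Real.log_mul (by positivity) (by positivity)]
      congr 1
      simp only [L, Complex.log_re]
      rw [Real.log_pow]; norm_num
    have hds : dslope L 0 u = (starRingEnd ℂ u) * L u := by
      rw [dslope_of_ne _ hu0, slope_def_field]
      have : L 0 = 0 := by simp [L]
      rw [this, sub_zero, sub_zero, div_eq_iff hu0]
      linear_combination (-(L u)) * huu
    have hnsq : ((‖w + ζ * u‖^2 : ℝ) : ℂ) = (starRingEnd ℂ w + starRingEnd ℂ ζ * starRingEnd ℂ u) * (w + ζ * u) := by
      rw [← Complex.normSq_eq_norm_sq, ← Complex.mul_conj, mul_comm]; simp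
    have hH : H u = c * ((‖w‖^2 + ‖ζ‖^2 : ℝ) + 2 * (starRingEnd ℂ w) * ζ * u) + 2 * (((‖w + ζ * u‖^2 : ℝ) : ℂ) * L u) := by
      simp only [H]
      rw [hnsq, hds]; ring
    have hn2 : ‖w + ζ * u‖^2 = ‖w‖^2 + ‖ζ‖^2 + 2 * ((starRingEnd ℂ w) * ζ * u).re := by
      rw [← Complex.normSq_eq_norm_sq, Complex.normSq_add, ← Complex.normSq_eq_norm_sq w, ← Complex.normSq_eq_norm_sq ζ,
        Complex.normSq_mul, Complex.normSq_eq_norm_sq u, hu]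
      have : (w * (starRingEnd ℂ) (ζ * u)).re = ((starRingEnd ℂ w) * ζ * u).re := by
        rw [← Complex.conj_re]; simp [mul_assoc]
      rw [this]; ring
    rw [hH]
    simp only [c, Complex.add_re, Complex.re_ofReal_mul, bhφ, Complex.ofReal_re]
    have e1 : (2 * (starRingEnd ℂ w) * ζ * u).re = 2 * ((starRingEnd ℂ w) * ζ * u).re := by
      rw [mul_assoc, mul_assoc, ← mul_assoc (starRingEnd ℂ w)]; simp
    have e2 : (2 * (((‖w + ζ * u‖^2 : ℝ) : ℂ) * L u)).re = 2 * (‖w + ζ * u‖^2 * (L u).re) := by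
      rw [← Complex.re_ofReal_mul]; simp
    rw [e1, e2, ← hn2, hlog]; ring
  rw [hre]
  have hd0 : dslope L 0 0 = ζ / w := by
    rw [dslope_same, (hLd 0 hs0).deriv]; simp
  have : H 0 = (((‖w‖^2 + ‖ζ‖^2) * Real.log (‖w‖^2) + 2 * ‖ζ‖^2 : ℝ) : ℂ) := by
    simp only [H, hd0]
    have e3 : (starRingEnd ℂ ζ) * ζ = ((‖ζ‖^2 : ℝ) : ℂ) := by
      rw [mul_comm, Complex.mul_conj, Complex.normSq_eq_norm_sq]
    have : (starRingEnd ℂ) ζ * (w + ζ * 0) * (ζ / w) = ((‖ζ‖^2 : ℝ) : ℂ) := by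
      rw [← e3]; field_simp; ring
    rw [this]
    simp [L, c]; ring
  rw [this, Complex.ofReal_re]

theorem bhK_symm (w ζ : ℂ) : ∫ t, bhφ (w + ζ * bhz t) ∂bhσ = ∫ t, bhφ (starRingEnd ℂ ζ + starRingEnd ℂ w * bhz t) ∂bhσ := by
  congr 1
  funext t
  have : ‖w + ζ * bhz t‖ = ‖starRingEnd ℂ ζ + starRingEnd ℂ w * bhz t‖ := by
    have huu : bhz t * (starRingEnd ℂ (bhz t)) = 1 := by
      rw [Complex.mul_conj, Complex.normSq_eq_norm_sq, bhz_norm]; simp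
    calc ‖w + ζ * bhz t‖ = ‖starRingEnd ℂ (w + ζ * bhz t) * bhz t‖ := by
          rw [norm_mul, bhz_norm, mul_one, RCLike.norm_conj]
      _ = _ := by
          congr 1
          simp only [map_add, map_mul]
          linear_combination (starRingEnd ℂ ζ) * huu
  simp only [bhφ, this]

theorem bhK (w ζ : ℂ) : ∫ t, bhφ (w + ζ * bhz t) ∂bhσ = bhM (‖w‖^2) (‖ζ‖^2) := by
  unfold bhM
  rcases lt_trichotomy ‖ζ‖ ‖w‖ with h | h | h
  · have h2 : ‖ζ‖^2 ≤ ‖w‖^2 := by gcongr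
    rw [bhK_lt w ζ h, max_eq_left h2, min_eq_right h2]
  · rw [h, max_self, min_self]
    by_cases hw : w = 0
    · have : ζ = 0 := by rw [← norm_eq_zero, h, hw, norm_zero]
      simp [hw, this, bhφ]
    have hwp : 0 < ‖w‖ := norm_pos_iff.2 hw
    have hc : Continuous fun r : ℝ => ∫ t, bhφ (w + (r * ζ) * bhz t) ∂bhσ := by
      have : (fun r : ℝ => ∫ t, bhφ (w + (r * ζ) * bhz t) ∂bhσ) =
          fun r : ℝ => (2 * π)⁻¹ * ∫ t in (0:ℝ)..(2*π), bhφ (w + (r * ζ) * circleMap 0 1 t) := by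
        funext r
        rw [bhσ_integral (fun u => bhφ (w + (r * ζ) * u))]; rfl
      rw [this]
      refine Continuous.mul continuous_const ?_
      apply intervalIntegral.continuous_parametric_intervalIntegral_of_continuous'
      unfold Function.uncurry
      fun_prop
    have hl : Filter.Tendsto (fun r : ℝ => ∫ t, bhφ (w + (r * ζ) * bhz t) ∂bhσ) (nhdsWithin 1 (Set.Ioo 0 1))
        (nhds (∫ t, bhφ (w + ((1:ℝ) * ζ) * bhz t) ∂bhσ)) := (hc.tendsto 1).mono_left nhdsWithin_le_nhds
    have hr : Filter.Tendsto (fun r : ℝ => (‖w‖^2 + (r*‖w‖)^2) * Real.log (‖w‖^2) + 2 * (r*‖w‖)^2) (nhdsWithin 1 (Set.Ioo 0 1))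
        (nhds ((‖w‖^2 + (1*‖w‖)^2) * Real.log (‖w‖^2) + 2 * (1*‖w‖)^2)) := 
      (Continuous.tendsto (by fun_prop) 1).mono_left nhdsWithin_le_nhds
    have he : (fun r : ℝ => ∫ t, bhφ (w + (r * ζ) * bhz t) ∂bhσ) =ᶠ[nhdsWithin 1 (Set.Ioo 0 1)]
        (fun r : ℝ => (‖w‖^2 + (r*‖w‖)^2) * Real.log (‖w‖^2) + 2 * (r*‖w‖)^2) := by
      filter_upwards [self_mem_nhdsWithin] with r hr
      have e : ‖(r:ℂ) * ζ‖ = r * ‖w‖ := by rw [norm_mul, h, Complex.norm_real, Real.norm_of_nonneg hr.1.le]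
      rw [bhK_lt, e]
      rw [e]; nlinarith [hr.2]
    have : (nhdsWithin (1:ℝ) (Set.Ioo 0 1)).NeBot := by
      rw [← mem_closure_iff_nhdsWithin_neBot, closure_Ioo (by norm_num)]; simp
    have := tendsto_nhds_unique (hl.congr' he) hr
    simpa using this
  · have h2 : ‖w‖^2 ≤ ‖ζ‖^2 := by gcongr
    rw [bhK_symm, bhK_lt, max_eq_right h2, min_eq_left h2]
    · simp only [RCLike.norm_conj]; ring
    · simpa only [RCLike.norm_conj] using h

theorem bh_log1 (a b : ℝ) (ha : 0 < a) (h : a ≤ b) : 2 * (b - a) ≤ (a + b) * (Real.log b - Real.log a) := by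
  have hx : 0 ≤ b / a - 1 := by rw [sub_nonneg, le_div_iff₀ ha]; linarith
  have hb : 0 < b := ha.trans_le h
  have := Real.le_log_one_add_of_nonneg hx
  rw [show 1 + (b / a - 1) = b / a by ring, Real.log_div hb.ne' ha.ne'] at this
  rw [div_le_iff₀ (by linarith)] at this
  have h2 : b / a * a = b := by field_simp
  have h3 := mul_le_mul_of_nonneg_right this ha.le
  nlinarith

theorem bh_log2 (a b : ℝ) (ha : 0 < a) (h : a ≤ b) : 2 * a * b * (Real.log b - Real.log a) ≤ b^2 - a^2 := by
  have hb : 0 < b := ha.trans_le h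
  have h1 : 0 ≤ Real.log (b/a) := Real.log_nonneg (by rw [le_div_iff₀ ha]; linarith)
  have := Real.self_le_sinh_iff.2 h1
  rw [Real.sinh_log (by positivity), Real.log_div hb.ne' ha.ne'] at this
  have h2 : (b/a - (b/a)⁻¹)/2 = (b^2-a^2)/(2*a*b) := by field_simp
  rw [h2, le_div_iff₀ (by positivity)] at this
  linarith

theorem bhM_tangent (x y₀ : ℝ) (hx : 0 ≤ x) (hy₀ : 0 < y₀) :
    ∃ κ : ℝ, ∀ y, 0 ≤ y → bhM x y₀ + κ * (y - y₀) ≤ bhM x y := by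
  unfold bhM
  rcases le_or_gt y₀ x with h | h
  · refine ⟨Real.log x + 2, fun y hy => ?_⟩
    rw [max_eq_left h, min_eq_right h]
    rcases le_or_gt y x with h2 | h2
    · rw [max_eq_left h2, min_eq_right h2]; apply le_of_eq; ring
    · rw [max_eq_right h2.le, min_eq_left h2.le]
      have := bh_log1 x y (hy₀.trans_le h) h2.le
      nlinarith
  · rw [max_eq_right h.le, min_eq_left h.le]
    -- `D y ≥ 0` for `y ≥ x`
    have hD : ∀ y, 0 < y → x ≤ y → 0 ≤ (x + y) * (Real.log y - Real.log y₀) - (x / y₀ + 1) * (y - y₀) := by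
      intro y hy hxy
      have hc : Real.log y - Real.log y₀ ≤ (y - y₀) / y₀ := by
        have := Real.log_le_sub_one_of_pos (x := y / y₀) (by positivity)
        rw [Real.log_div hy.ne' hy₀.ne'] at this
        refine this.trans (le_of_eq ?_); field_simp
      have hlin : (x + y) * (Real.log y - Real.log y₀) - (x / y₀ + 1) * (y - y₀) =
          x * ((Real.log y - Real.log y₀) - (y - y₀) / y₀) + (y * (Real.log y - Real.log y₀) - (y - y₀)) := by
        field_simp; ring
      rw [hlin]
      rcases le_total y y₀ with h3 | h3
      · have h4 := bh_log2 y y₀ hy h3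
        have h5 : x * ((Real.log y - Real.log y₀) - (y - y₀) / y₀) ≥ y * ((Real.log y - Real.log y₀) - (y - y₀) / y₀) :=
          mul_le_mul_of_nonpos_right hxy (by linarith)
        have h6 : 0 ≤ y * ((Real.log y - Real.log y₀) - (y - y₀) / y₀) + (y * (Real.log y - Real.log y₀) - (y - y₀)) := by
          have : y * ((Real.log y - Real.log y₀) - (y - y₀) / y₀) + (y * (Real.log y - Real.log y₀) - (y - y₀)) =
            ((y₀^2 - y^2) - 2 * y * y₀ * (Real.log y₀ - Real.log y)) / y₀ := by field_simp; ring
          rw [this]; exact div_nonneg (by linarith) hy₀.le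
        linarith
      · have h4 := bh_log1 y₀ y hy₀ h3
        have h5 : x * ((Real.log y - Real.log y₀) - (y - y₀) / y₀) ≥ y₀ * ((Real.log y - Real.log y₀) - (y - y₀) / y₀) :=
          mul_le_mul_of_nonpos_right h.le (by linarith)
        have h6 : y₀ * ((y - y₀) / y₀) = y - y₀ := by field_simp
        nlinarith
    refine ⟨Real.log y₀ + x / y₀ + 1, fun y hy => ?_⟩
    rcases le_or_gt x y with h2 | h2
    · rw [max_eq_right h2, min_eq_left h2]
      rcases hy.eq_or_lt with rfl | hy'
      · have : x = 0 := le_antisymm h2 hx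
        subst this
        simp; nlinarith
      · have := hD y hy' h2
        nlinarith
    · rw [max_eq_left h2.le, min_eq_right h2.le]
      have hxp : 0 < x := hy.trans_lt h2
      have d1 := hD x hxp le_rfl
      have d0 : 0 ≤ x * (Real.log x - Real.log y₀) + y₀ - x := by
        have := Real.log_le_sub_one_of_pos (x := y₀ / x) (by positivity)
        rw [Real.log_div hy₀.ne' hxp.ne'] at this
        have h3 := mul_le_mul_of_nonneg_left this hxp.le
        have h4 : x * (y₀ / x - 1) = y₀ - x := by field_simp
        nlinarith
      -- linear interpolation in y between 0 and x
      have e : (x + y) * Real.log x + 2 * y - ((x + y₀) * Real.log y₀ + 2 * x + (Real.log y₀ + x / y₀ + 1) * (y - y₀)) =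
          (y / x) * ((x + x) * (Real.log x - Real.log y₀) - (x / y₀ + 1) * (x - y₀)) +
          (1 - y / x) * (x * (Real.log x - Real.log y₀) + y₀ - x) := by
        field_simp; ring
      have h5 : 0 ≤ y / x := by positivity
      have h6 : 0 ≤ 1 - y / x := by rw [sub_nonneg, div_le_one hxp]; exact h2.le
      have := add_nonneg (mul_nonneg h5 d1) (mul_nonneg h6 d0)
      linarith

open MeasureTheory in
noncomputable def bhG : MeasureTheory.Measure ℂ :=
  (volume : Measure ℂ).withDensity (fun z => ENNReal.ofReal (π⁻¹ * rexp (-‖z‖^2)))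

theorem bhG_integral {E : Type*} [NormedAddCommGroup E] [NormedSpace ℝ E] (F : ℂ → E) :
    ∫ z, F z ∂bhG = ∫ z, (π⁻¹ * rexp (-‖z‖^2)) • F z := by
  unfold bhG
  rw [integral_withDensity_eq_integral_toReal_smul (by fun_prop) (by simp)]
  refine MeasureTheory.integral_congr_ae (Filter.Eventually.of_forall fun z => ?_)
  simp only
  rw [ENNReal.toReal_ofReal (by positivity)]

theorem bhG_moment (q : ℝ) (hq : 0 ≤ q) : ∫ z, ‖z‖ ^ q ∂bhG = Real.Gamma (q/2 + 1) := by
  rw [bhG_integral]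
  have := Complex.integral_rpow_mul_exp_neg_rpow (p := 2) (q := q) (by norm_num) (by linarith)
  have e : ∀ z : ℂ, (π⁻¹ * rexp (-‖z‖^2)) • ‖z‖ ^ q = π⁻¹ * (‖z‖ ^ q * rexp (-‖z‖ ^ (2:ℝ))) := by
    intro z; rw [smul_eq_mul, Real.rpow_two]; ring
  simp only [e]
  rw [MeasureTheory.integral_const_mul, this]
  have : (q+2)/2 = q/2+1 := by ring
  rw [this]; field_simp

theorem bhG_moment_int (q : ℝ) (hq : 0 ≤ q) : MeasureTheory.Integrable (fun z : ℂ => ‖z‖ ^ q) bhG := by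
  by_contra h
  have := bhG_moment q hq
  rw [MeasureTheory.integral_undef h] at this
  have := Real.Gamma_pos_of_pos (s := q/2+1) (by positivity)
  linarith

instance bhG_prob : MeasureTheory.IsProbabilityMeasure bhG := by
  have hfin : MeasureTheory.IsFiniteMeasure bhG := by
    have := bhG_moment_int 0 le_rfl
    simp only [Real.rpow_zero] at this
    exact (MeasureTheory.integrable_const_iff.1 this).resolve_left one_ne_zero
  have := bhG_moment 0 le_rfl
  simp only [Real.rpow_zero] at this
  rw [MeasureTheory.integral_const] at this
  simp at this
  constructor
  have h2 := (ENNReal.ofReal_toReal (MeasureTheory.measure_ne_top bhG Set.univ))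
  rw [← h2]
  have : (bhG Set.univ).toReal = 1 := this
  rw [this]; simp

theorem bhG_sq : ∫ z, ‖z‖ ^ 2 ∂bhG = 1 := by
  have := bhG_moment 2 (by norm_num)
  simp only [Real.rpow_two] at this
  rw [this]; norm_num [Real.Gamma_two]

theorem bhG_sq_int : MeasureTheory.Integrable (fun z : ℂ => ‖z‖ ^ 2) bhG := by
  simpa only [Real.rpow_two] using bhG_moment_int 2 (by norm_num)

theorem bhG_four_int : MeasureTheory.Integrable (fun z : ℂ => ‖z‖ ^ 4) bhG := by
  have := bhG_moment_int 4 (by norm_num)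
  refine this.congr (Filter.Eventually.of_forall fun z => ?_)
  simp only
  rw [show (4:ℝ) = ((4:ℕ):ℝ) by norm_num, Real.rpow_natCast]

theorem bhφ_bound (z : ℂ) : |bhφ z| ≤ 1 + ‖z‖ ^ 4 := by
  unfold bhφ
  have hx : 0 ≤ ‖z‖^2 := by positivity
  have e : ‖z‖^4 = (‖z‖^2)^2 := by ring
  rw [e]
  generalize ‖z‖^2 = x at hx
  rcases hx.eq_or_lt with rfl | hx
  · simp
  rw [abs_le]
  constructor
  · have := Real.one_sub_inv_le_log_of_pos hx
    have h2 := mul_le_mul_of_nonneg_left this hx.le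
    have : x * (1 - x⁻¹) = x - 1 := by field_simp
    nlinarith
  · have := Real.log_le_sub_one_of_pos hx
    nlinarith

theorem bh_four (w z : ℂ) : ‖w + z‖ ^ 4 ≤ 8 * (‖w‖^4 + ‖z‖^4) := by
  have h := norm_add_le w z
  have h2 : ‖w+z‖^4 ≤ (‖w‖ + ‖z‖)^4 := by gcongr
  refine h2.trans ?_
  have := add_pow_le (norm_nonneg w) (norm_nonneg z) 4
  norm_num at this
  linarith

theorem bhφ_int (w c : ℂ) : MeasureTheory.Integrable (fun g : ℂ => bhφ (w + c * g)) bhG := by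
  have h : MeasureTheory.Integrable (fun g : ℂ => 1 + 8 * (‖w‖^4 + ‖c‖^4 * ‖g‖^4)) bhG := by
    have := bhG_four_int
    fun_prop
  refine h.mono' (Continuous.aestronglyMeasurable (by fun_prop)) (Filter.Eventually.of_forall fun g => ?_)
  refine (bhφ_bound _).trans ?_
  have := bh_four w (c*g)
  rw [norm_mul, mul_pow] at this
  linarith

theorem bhG_rot (u : ℂ) (hu : ‖u‖ = 1) (F : ℂ → ℝ) : ∫ g, F (u * g) ∂bhG = ∫ g, F g ∂bhG := by
  have huc : u ∈ Submonoid.unitSphere ℂ := by simpa [Submonoid.unitSphere] using hu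
  let c : Circle := ⟨u, huc⟩
  let e := rotation c
  rw [bhG_integral, bhG_integral]
  have hh := e.measurePreserving.integral_comp e.toHomeomorph.measurableEmbedding
    (fun z => (π⁻¹ * rexp (-‖z‖^2)) • F z)
  rw [← hh]
  refine MeasureTheory.integral_congr_ae (Filter.Eventually.of_forall fun z => ?_)
  have : ‖e z‖ = ‖z‖ := e.norm_map z
  simp only [this]
  rfl

theorem bhG_entropy : ∫ g, bhφ g ∂bhG ≤ 1/2 := by
  have hd : HasDerivAt Real.Gamma (1 - Real.eulerMascheroniConstant) 2 := by
    have := Real.hasDerivAt_Gamma_nat 1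
    norm_num at this
    convert! this using 1
    ring
  have hslope := hd.tendsto_slope_zero_right
  have hle : ∀ h : ℝ, 0 < h → ∫ g, bhφ g ∂bhG ≤ h⁻¹ • (Real.Gamma (2 + h) - Real.Gamma 2) := by
    intro h hh
    have e1 := bhG_moment (2 + 2*h) (by positivity)
    have e2 := bhG_moment_int (2 + 2*h) (by positivity)
    rw [show (2+2*h)/2+1 = 2 + h by ring] at e1
    have : ∫ g, bhφ g ∂bhG ≤ ∫ g : ℂ, h⁻¹ * (‖g‖ ^ (2+2*h) - ‖g‖^2) ∂bhG := by
      refine MeasureTheory.integral_mono (by simpa using bhφ_int 0 1) ((e2.sub bhG_sq_int).const_mul _) fun g => ?_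
      simp only [bhφ]
      by_cases hg : g = 0
      · have : 2 + 2*h ≠ 0 := by positivity
        simp [hg, Real.zero_rpow this]
      have hgp : 0 < ‖g‖ := norm_pos_iff.2 hg
      rw [Real.rpow_add hgp, Real.rpow_two, Real.rpow_mul hgp.le, Real.rpow_two]
      have := Real.add_one_le_exp (Real.log (‖g‖^2) * h)
      rw [← Real.rpow_def_of_pos (by positivity)] at this
      have h3 : Real.log (‖g‖^2) ≤ h⁻¹ * ((‖g‖^2)^h - 1) := by
        rw [← div_eq_inv_mul, le_div_iff₀ hh]; linarith
      calc _ ≤ ‖g‖^2 * (h⁻¹ * ((‖g‖^2)^h - 1)) := by gcongr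
        _ = _ := by ring
    refine this.trans (le_of_eq ?_)
    rw [MeasureTheory.integral_const_mul, MeasureTheory.integral_sub e2 bhG_sq_int, e1, bhG_sq, Real.Gamma_two, smul_eq_mul]
  have h1 : ∫ g, bhφ g ∂bhG ≤ 1 - Real.eulerMascheroniConstant := by
    refine ge_of_tendsto hslope ?_
    filter_upwards [self_mem_nhdsWithin] with h hh
    exact hle h hh
  have := Real.one_half_lt_eulerMascheroniConstant
  linarith

theorem bhG_charFun (t : ℂ) : MeasureTheory.charFun bhG t = Complex.exp (-(‖t‖:ℂ)^2/4) := by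
  rw [MeasureTheory.charFun_apply, bhG_integral]
  have := GaussianFourier.integral_cexp_neg_mul_sq_norm_add (V := ℂ) (b := 1) (by simp) Complex.I t
  have e : ∀ z : ℂ, (π⁻¹ * rexp (-‖z‖^2)) • Complex.exp ((inner ℝ z t : ℝ) * Complex.I) =
      (π:ℂ)⁻¹ * Complex.exp (-1 * (‖z‖:ℂ)^2 + Complex.I * (inner ℝ t z : ℝ)) := by
    intro z
    rw [Complex.exp_add, real_inner_comm, Complex.real_smul]
    push_cast
    rw [mul_comm Complex.I, neg_one_mul]; ring
  simp only [e]
  rw [MeasureTheory.integral_const_mul, this]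
  have hpi : (π:ℂ) ≠ 0 := by exact_mod_cast Real.pi_ne_zero
  simp [Complex.finrank_real_complex]

theorem bhG_conv (a b c : ℝ) (h : a^2 + b^2 = c^2) :
    (bhG.prod bhG).map (fun p : ℂ × ℂ => a • p.1 + b • p.2) = bhG.map (c • ·) := by
  have hp : ∀ r : ℝ, MeasureTheory.IsProbabilityMeasure (bhG.map (r • ·)) := fun r =>
    MeasureTheory.Measure.isProbabilityMeasure_map (by fun_prop)
  have h1 : (bhG.prod bhG).map (fun p : ℂ × ℂ => a • p.1 + b • p.2) =
      ((bhG.map (a • ·)).prod (bhG.map (b • ·))).map (fun p => p.1 + p.2) := by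
    rw [MeasureTheory.Measure.map_prod_map _ _ (by fun_prop) (by fun_prop), MeasureTheory.Measure.map_map (by fun_prop) (by fun_prop)]
    rfl
  rw [h1]
  apply MeasureTheory.Measure.ext_of_charFun
  rw [ProbabilityTheory.charFun_map_add_prod_eq_mul]
  funext t
  simp only [Pi.mul_apply, MeasureTheory.charFun_map_smul, bhG_charFun]
  rw [← Complex.exp_add]
  congr 1
  simp only [norm_smul, Complex.ofReal_mul, mul_pow]
  have : ∀ r : ℝ, ((‖r‖:ℝ):ℂ)^2 = ((r^2:ℝ):ℂ) := fun r => by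
    rw [Real.norm_eq_abs, ← Complex.ofReal_pow, sq_abs]
  simp only [this, ← h]
  push_cast; ring

noncomputable def bhB (w : ℂ) (v : ℝ) : ℝ := ∫ g, bhφ (w + (√v : ℂ) * g) ∂bhG

theorem bhB_semi (w : ℂ) (u v : ℝ) (hu : 0 ≤ u) (hv : 0 ≤ v) :
    ∫ g, bhB (w + (√v : ℂ) * g) u ∂bhG = bhB w (u + v) := by
  have hc := bhG_conv (√v) (√u) (√(u+v)) (by
    rw [Real.sq_sqrt hu, Real.sq_sqrt hv, Real.sq_sqrt (by positivity)]; ring)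
  have hF : Continuous fun z => bhφ (w + z) := by fun_prop
  have e1 : bhB w (u+v) = ∫ z, bhφ (w + z) ∂(bhG.map (√(u+v) • ·)) := by
    rw [MeasureTheory.integral_map (by fun_prop) hF.aestronglyMeasurable]
    simp only [bhB, Complex.real_smul]
  have hi : MeasureTheory.Integrable (fun z => bhφ (w + z)) (bhG.map (√(u+v) • ·)) := by
    rw [MeasureTheory.integrable_map_measure hF.aestronglyMeasurable (by fun_prop)]
    have := bhφ_int w (√(u+v) : ℂ)
    simpa [Function.comp_def, Complex.real_smul] using this
  rw [← hc] at e1 hi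
  rw [e1, MeasureTheory.integral_map (by fun_prop) hF.aestronglyMeasurable]
  rw [MeasureTheory.integrable_map_measure hF.aestronglyMeasurable (by fun_prop)] at hi
  have hi' : MeasureTheory.Integrable (fun x : ℂ × ℂ => bhφ (w + (√v • x.1 + √u • x.2))) (bhG.prod bhG) := hi
  rw [MeasureTheory.integral_prod _ hi']
  simp only [bhB, Complex.real_smul, add_assoc]

theorem bhφ_prod_int {Ω : Type*} [MeasurableSpace Ω] [TopologicalSpace Ω] [OpensMeasurableSpace Ω] [SecondCountableTopology Ω]
    (P : MeasureTheory.Measure Ω) [MeasureTheory.IsProbabilityMeasure P]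
    (f h : Ω → ℂ) (hf : Continuous f) (hh : Continuous h) (A C : ℝ) (hA : ∀ t, ‖f t‖ ≤ A) (hC : ∀ t, ‖h t‖ ≤ C) :
    MeasureTheory.Integrable (fun p : Ω × ℂ => bhφ (f p.1 + h p.1 * p.2)) (P.prod bhG) := by
  have h0 : MeasureTheory.Integrable (fun g : ℂ => 1 + 8 * (A^4 + C^4 * ‖g‖^4)) bhG := by
    have := bhG_four_int
    fun_prop
  have h1 := h0.comp_snd P
  refine h1.mono' (Continuous.aestronglyMeasurable (by fun_prop)) (Filter.Eventually.of_forall fun p => ?_)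
  refine (bhφ_bound _).trans ?_
  have h2 := bh_four (f p.1) (h p.1 * p.2)
  rw [norm_mul, mul_pow] at h2
  have h3 : ‖f p.1‖^4 ≤ A^4 := by gcongr; exact hA _
  have h4 : ‖h p.1‖^4 * ‖p.2‖^4 ≤ C^4 * ‖p.2‖^4 := by gcongr; exact hC _
  linarith

theorem bhB_prodInt (w a : ℂ) : MeasureTheory.Integrable (fun p : ℝ × ℂ => bhφ (w + (‖a‖:ℂ) * bhz p.1 * p.2)) (bhσ.prod bhG) :=
    bhφ_prod_int bhσ (fun _ => w) (fun t => (‖a‖:ℂ) * bhz t) (by fun_prop) (by fun_prop) ‖w‖ ‖a‖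
    (fun _ => le_rfl) (fun t => by simp [bhz_norm])

theorem bhB_circ (w a g : ℂ) : ∫ t, bhφ (w + (‖a‖:ℂ) * bhz t * g) ∂bhσ = bhM (‖w‖^2) (‖a‖^2 * ‖g‖^2) := by
  have := bhK w ((‖a‖:ℂ) * g)
  rw [norm_mul, Complex.norm_real, norm_norm, mul_pow] at this
  rw [← this]
  congr 1; funext t
  congr 1; ring

theorem bhB_rot (w a : ℂ) (t : ℝ) : ∫ g, bhφ (w + (‖a‖:ℂ) * bhz t * g) ∂bhG = bhB w (‖a‖^2) := by
  have hsq : √(‖a‖^2) = ‖a‖ := Real.sqrt_sq (norm_nonneg a)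
  unfold bhB
  rw [hsq]
  have := bhG_rot (bhz t) (bhz_norm t) (fun g => bhφ (w + (‖a‖:ℂ) * g))
  rw [← this]
  simp only [mul_assoc]

theorem bhB_M (w a : ℂ) : bhB w (‖a‖^2) = ∫ g, bhM (‖w‖^2) (‖a‖^2 * ‖g‖^2) ∂bhG := by
  have h2 : ∫ t, ∫ g, bhφ (w + (‖a‖:ℂ) * bhz t * g) ∂bhG ∂bhσ = ∫ g, ∫ t, bhφ (w + (‖a‖:ℂ) * bhz t * g) ∂bhσ ∂bhG :=
    MeasureTheory.integral_integral_swap (f := fun t g => bhφ (w + (‖a‖:ℂ) * bhz t * g)) (bhB_prodInt w a)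
  simp only [bhB_rot, bhB_circ] at h2
  rw [← h2]
  simp

theorem bhB_Mint (w a : ℂ) : MeasureTheory.Integrable (fun g : ℂ => bhM (‖w‖^2) (‖a‖^2 * ‖g‖^2)) bhG := by
  have h := (bhB_prodInt w a).integral_prod_right
  simp only [bhB_circ] at h
  exact h

theorem bhB_step (w a : ℂ) : ∫ t, bhφ (w + a * bhz t) ∂bhσ ≤ bhB w (‖a‖^2) := by
  by_cases ha : a = 0
  · simp [ha, bhB]
  have hap : 0 < ‖a‖^2 := by positivity
  have hMi := bhB_Mint w a
  obtain ⟨κ, hκ⟩ := bhM_tangent (‖w‖^2) (‖a‖^2) (by positivity) hap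
  rw [bhK, bhB_M]
  have hki : MeasureTheory.Integrable (fun g : ℂ => κ * (‖a‖^2 * ‖g‖^2 - ‖a‖^2)) bhG :=
    ((bhG_sq_int.const_mul _).sub (MeasureTheory.integrable_const _)).const_mul _
  have e : ∫ g : ℂ, (bhM (‖w‖^2) (‖a‖^2) + κ * (‖a‖^2 * ‖g‖^2 - ‖a‖^2)) ∂bhG = bhM (‖w‖^2) (‖a‖^2) := by
    rw [MeasureTheory.integral_add (MeasureTheory.integrable_const _) hki, MeasureTheory.integral_const_mul,
      MeasureTheory.integral_sub (bhG_sq_int.const_mul _) (MeasureTheory.integrable_const _), MeasureTheory.integral_const_mul, bhG_sq]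
    simp
  rw [← e]
  exact MeasureTheory.integral_mono ((MeasureTheory.integrable_const _).add hki) hMi fun g => hκ _ (by positivity)

theorem bhP_split_int (N : ℕ) (a : Fin (N+1) → ℂ) (F : ℂ → ℝ) (hF : Continuous F) (w : ℂ) :
    MeasureTheory.Integrable (fun p : ℝ × (Fin N → ℝ) => F ((w + a 0 * bhz p.1) + ∑ k : Fin N, a k.succ * bhz (p.2 k)))
      (bhσ.prod (bhP N)) := by
  obtain ⟨C, hC⟩ := (isCompact_closedBall (0:ℂ) ((‖w‖ + ‖a 0‖) + ∑ k : Fin N, ‖a k.succ‖)).exists_bound_of_continuousOn hF.continuousOn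
  refine MeasureTheory.Integrable.of_bound (C := C) (Continuous.aestronglyMeasurable (by fun_prop)) ?_
  refine Filter.Eventually.of_forall fun t => hC _ ?_
  rw [mem_closedBall_zero_iff]
  refine (norm_add_le _ _).trans ?_
  gcongr
  · refine (norm_add_le _ _).trans ?_
    simp [bhz_norm]
  · refine (norm_sum_le _ _).trans ?_
    simp [bhz_norm]

theorem bhP_split (N : ℕ) (a : Fin (N+1) → ℂ) (F : ℂ → ℝ) (hF : Continuous F) (w : ℂ) :
    ∫ t, F (w + ∑ k, a k * bhz (t k)) ∂(bhP (N+1)) =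
      ∫ s, ∫ t, F ((w + a 0 * bhz s) + ∑ k : Fin N, a k.succ * bhz (t k)) ∂(bhP N) ∂bhσ := by
  have h := MeasureTheory.measurePreserving_piFinSuccAbove (fun _ : Fin (N+1) => bhσ) 0
  have e := h.integral_comp' (fun p : ℝ × (Fin N → ℝ) => F ((w + a 0 * bhz p.1) + ∑ k : Fin N, a k.succ * bhz (p.2 k)))
  have i := MeasureTheory.integral_prod _ (bhP_split_int N a F hF w)
  rw [← i]
  refine Eq.trans ?_ e
  unfold bhP
  congr 1
  funext t
  rw [Fin.sum_univ_succ, add_assoc]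
  rfl

theorem bhB_fubini (w a : ℂ) (v : ℝ) :
    ∫ s, bhB (w + a * bhz s) v ∂bhσ = ∫ g, ∫ s, bhφ ((w + (√v:ℂ) * g) + a * bhz s) ∂bhσ ∂bhG := by
  have hInt : MeasureTheory.Integrable (fun p : ℝ × ℂ => bhφ ((w + a * bhz p.1) + (√v:ℂ) * p.2)) (bhσ.prod bhG) :=
    bhφ_prod_int bhσ (fun t => w + a * bhz t) (fun _ => (√v:ℂ)) (by fun_prop) (by fun_prop) (‖w‖ + ‖a‖) ‖(√v:ℂ)‖
      (fun t => (norm_add_le _ _).trans (by simp [bhz_norm])) (fun _ => le_rfl)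
  have h2 : ∫ t, ∫ g, bhφ ((w + a * bhz t) + (√v:ℂ) * g) ∂bhG ∂bhσ = ∫ g, ∫ t, bhφ ((w + a * bhz t) + (√v:ℂ) * g) ∂bhσ ∂bhG :=
    MeasureTheory.integral_integral_swap (f := fun t g => bhφ ((w + a * bhz t) + (√v:ℂ) * g)) hInt
  unfold bhB
  rw [h2]
  congr 1; funext g; congr 1; funext s
  rw [add_right_comm]

theorem bhB_fubini_int (w a : ℂ) (v : ℝ) :
    MeasureTheory.Integrable (fun s => bhB (w + a * bhz s) v) bhσ ∧
    MeasureTheory.Integrable (fun g => ∫ s, bhφ ((w + (√v:ℂ) * g) + a * bhz s) ∂bhσ) bhG := by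
  have hInt : MeasureTheory.Integrable (fun p : ℝ × ℂ => bhφ ((w + a * bhz p.1) + (√v:ℂ) * p.2)) (bhσ.prod bhG) :=
    bhφ_prod_int bhσ (fun t => w + a * bhz t) (fun _ => (√v:ℂ)) (by fun_prop) (by fun_prop) (‖w‖ + ‖a‖) ‖(√v:ℂ)‖
      (fun t => (norm_add_le _ _).trans (by simp [bhz_norm])) (fun _ => le_rfl)
  refine ⟨hInt.integral_prod_left, ?_⟩
  have := hInt.integral_prod_right
  simp only [add_right_comm w (a * bhz _)] at this
  exact this

theorem bhB_int (w : ℂ) (u v : ℝ) : MeasureTheory.Integrable (fun g => bhB (w + (√v:ℂ) * g) u) bhG := by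
  have h0 : MeasureTheory.Integrable (fun g : ℂ => 1 + 8 * (8 * (‖w‖^4 + ‖(√v:ℂ)‖^4 * ‖g‖^4))) bhG := by
    have := bhG_four_int
    fun_prop
  have h0' : MeasureTheory.Integrable (fun g : ℂ => 8 * (‖(√u:ℂ)‖^4 * ‖g‖^4)) bhG :=
    (bhG_four_int.const_mul (‖(√u:ℂ)‖^4)).const_mul 8
  have ha : MeasureTheory.Integrable (fun p : ℂ × ℂ => (1 + 8 * (8 * (‖w‖^4 + ‖(√v:ℂ)‖^4 * ‖p.1‖^4)))) (bhG.prod bhG) :=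
    h0.comp_fst bhG
  have hb : MeasureTheory.Integrable (fun p : ℂ × ℂ => 8 * (‖(√u:ℂ)‖^4 * ‖p.2‖^4)) (bhG.prod bhG) :=
    h0'.comp_snd bhG
  have h1 := ha.add hb
  have h2 : MeasureTheory.Integrable (fun p : ℂ × ℂ => bhφ ((w + (√v:ℂ) * p.1) + (√u:ℂ) * p.2)) (bhG.prod bhG) := by
    refine h1.mono' (Continuous.aestronglyMeasurable (by fun_prop)) (Filter.Eventually.of_forall fun p => ?_)
    refine (bhφ_bound _).trans ?_
    have h3 := bh_four (w + (√v:ℂ) * p.1) ((√u:ℂ) * p.2)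
    have h4 := bh_four w ((√v:ℂ) * p.1)
    rw [norm_mul, mul_pow] at h3 h4
    simp only [Pi.add_apply]
    linarith
  exact h2.integral_prod_left

theorem bh_entropy (N : ℕ) : ∀ (a : Fin N → ℂ) (w : ℂ),
    ∫ t, bhφ (w + ∑ k, a k * bhz (t k)) ∂(bhP N) ≤ bhB w (∑ k, ‖a k‖^2) := by
  induction N with
  | zero => intro a w; simp [bhB]
  | succ N ih =>
    intro a w
    rw [bhP_split N a bhφ bhφ_cont w, Fin.sum_univ_succ]
    set V := ∑ k : Fin N, ‖a k.succ‖^2 with hV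
    have hV0 : 0 ≤ V := by positivity
    have hih : ∀ s : ℝ, ∫ t, bhφ ((w + a 0 * bhz s) + ∑ k : Fin N, a k.succ * bhz (t k)) ∂(bhP N) ≤ bhB (w + a 0 * bhz s) V :=
      fun s => ih (fun k => a k.succ) (w + a 0 * bhz s)
    calc _ ≤ ∫ s, bhB (w + a 0 * bhz s) V ∂bhσ :=
          MeasureTheory.integral_mono (bhP_split_int N a bhφ bhφ_cont w).integral_prod_left (bhB_fubini_int w (a 0) V).1
            hih
      _ = ∫ g, ∫ s, bhφ ((w + (√V:ℂ) * g) + a 0 * bhz s) ∂bhσ ∂bhG := bhB_fubini w (a 0) V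
      _ ≤ ∫ g, bhB (w + (√V:ℂ) * g) (‖a 0‖^2) ∂bhG :=
          MeasureTheory.integral_mono (bhB_fubini_int w (a 0) V).2 (bhB_int w (‖a 0‖^2) V) fun g => bhB_step (w + (√V:ℂ) * g) (a 0)
      _ = _ := bhB_semi w _ V (by positivity) hV0

theorem bh_sq1 (w a : ℂ) : ∫ t, ‖w + a * bhz t‖^2 ∂bhσ = ‖w‖^2 + ‖a‖^2 := by
  rw [bhσ_integral (fun u => ‖w + a * u‖^2)]
  let H : ℂ → ℂ := fun u => (‖w‖^2 + ‖a‖^2 : ℝ) + 2 * (starRingEnd ℂ w) * a * u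
  have hHd : Differentiable ℂ H := by fun_prop
  have hav : Real.circleAverage H 0 1 = H 0 := by
    apply DiffContOnCl.circleAverage
    exact hHd.diffContOnCl
  have := Complex.reCLM.circleAverage_comp_comm (hHd.continuous.continuousOn.circleIntegrable' (c := 0) (R := 1))
  rw [Complex.reCLM_apply, hav] at this
  have e0 : (H 0).re = ‖w‖^2 + ‖a‖^2 := by simp only [H, mul_zero, add_zero, Complex.ofReal_re]
  rw [← e0, ← this]
  apply Real.circleAverage_congr_sphere
  intro u hu
  rw [abs_one, mem_sphere_zero_iff_norm] at hu
  have hn2 : ‖w + a * u‖^2 = ‖w‖^2 + ‖a‖^2 + 2 * ((starRingEnd ℂ w) * a * u).re := by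
    rw [← Complex.normSq_eq_norm_sq, Complex.normSq_add, ← Complex.normSq_eq_norm_sq w, ← Complex.normSq_eq_norm_sq a,
      Complex.normSq_mul, Complex.normSq_eq_norm_sq u, hu]
    have : (w * (starRingEnd ℂ) (a * u)).re = ((starRingEnd ℂ w) * a * u).re := by
      rw [← Complex.conj_re]; simp [mul_assoc]
    rw [this]; ring
  have e1 : (2 * (starRingEnd ℂ w) * a * u).re = 2 * ((starRingEnd ℂ w) * a * u).re := by
    rw [mul_assoc, mul_assoc, ← mul_assoc (starRingEnd ℂ w)]; simp
  simp only [H, Function.comp_apply, Complex.reCLM_apply, Complex.add_re, Complex.ofReal_re]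
  rw [hn2, e1]

theorem bh_sq (N : ℕ) : ∀ (a : Fin N → ℂ) (w : ℂ),
    ∫ t, ‖w + ∑ k, a k * bhz (t k)‖^2 ∂(bhP N) = ‖w‖^2 + ∑ k, ‖a k‖^2 := by
  induction N with
  | zero => intro a w; simp
  | succ N ih =>
    intro a w
    rw [bhP_split N a (fun z => ‖z‖^2) (by fun_prop) w, Fin.sum_univ_succ]
    have : ∀ s, ∫ t, ‖(w + a 0 * bhz s) + ∑ k : Fin N, a k.succ * bhz (t k)‖^2 ∂(bhP N) =
      ‖w + a 0 * bhz s‖^2 + ∑ k : Fin N, ‖a k.succ‖^2 := fun s => ih (fun k => a k.succ) _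
    simp only [this]
    have hi : MeasureTheory.Integrable (fun s => ‖w + a 0 * bhz s‖^2) bhσ := by
      refine MeasureTheory.Integrable.of_bound (C := (‖w‖ + ‖a 0‖)^2) (Continuous.aestronglyMeasurable (by fun_prop)) ?_
      refine Filter.Eventually.of_forall fun s => ?_
      rw [norm_pow, norm_norm]
      gcongr
      exact (norm_add_le _ _).trans (by simp [bhz_norm])
    rw [MeasureTheory.integral_add hi (MeasureTheory.integrable_const _), bh_sq1]
    simp; ring

theorem bhB_zero (A : ℝ) (hA : 0 < A) : bhB 0 A ≤ A * Real.log A + A / 2 := by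
  have e : ∀ g : ℂ, bhφ (0 + (√A:ℂ) * g) = A * Real.log A * ‖g‖^2 + A * bhφ g := by
    intro g
    have : ‖(0:ℂ) + (√A:ℂ) * g‖^2 = A * ‖g‖^2 := by
      rw [zero_add, norm_mul, mul_pow, Complex.norm_real, Real.norm_eq_abs, sq_abs, Real.sq_sqrt hA.le]
    simp only [bhφ, this]
    by_cases hg : g = 0
    · simp [hg]
    have hgp : 0 < ‖g‖ := norm_pos_iff.2 hg
    rw [Real.log_mul hA.ne' (by positivity)]
    ring
  have hi : MeasureTheory.Integrable (fun g => bhφ g) bhG := by simpa using bhφ_int 0 1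
  unfold bhB
  simp only [e]
  rw [MeasureTheory.integral_add (bhG_sq_int.const_mul _) (hi.const_mul _), MeasureTheory.integral_const_mul,
    MeasureTheory.integral_const_mul, bhG_sq]
  have := mul_le_mul_of_nonneg_left bhG_entropy hA.le
  linarith

theorem bh_pt (δ c x : ℝ) (h1 : δ < 1) (hx : 0 ≤ x) :
    rexp (-δ * c) * (x - δ * (x * Real.log x) + δ * c * x) ≤ x ^ (1 - δ) := by
  rcases hx.eq_or_lt with rfl | hx
  · simp [Real.zero_rpow (sub_pos.2 h1).ne']
  rw [Real.rpow_sub hx, Real.rpow_one, div_eq_mul_inv, ← Real.rpow_neg hx.le, Real.rpow_def_of_pos hx]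
  have := Real.add_one_le_exp (-δ * (Real.log x - c))
  have e : rexp (Real.log x * -δ) = rexp (-δ * c) * rexp (-δ * (Real.log x - c)) := by
    rw [← Real.exp_add]; congr 1; ring
  rw [e]
  calc _ = x * (rexp (-δ * c) * (-δ * (Real.log x - c) + 1)) := by ring
    _ ≤ _ := by gcongr

theorem bh_khinchine (N : ℕ) (δ : ℝ) (h0 : 0 < δ) (h1 : δ < 1) (a : Fin N → ℂ) :
    (∑ k, ‖a k‖ ^ 2) ^ (1 - δ) ≤ exp (δ / 2) * ∫ t, (‖∑ k, a k * bhz (t k)‖ ^ 2) ^ (1 - δ) ∂(bhP N) := by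
  have hsq := bh_sq N a 0
  have hent := bh_entropy N a 0
  have i1 := bh_sum_integrable N a (fun z => ‖z‖^2) (by fun_prop) 0
  have i2 := bh_sum_integrable N a bhφ bhφ_cont 0
  have i3 := bh_sum_integrable N a (fun z => (‖z‖^2) ^ (1-δ))
    (Continuous.rpow_const (by fun_prop) fun _ => Or.inr (by linarith)) 0
  simp only [zero_add] at hsq hent i1 i2 i3
  rw [norm_zero, zero_pow two_ne_zero, zero_add] at hsq
  set A := ∑ k, ‖a k‖^2 with hA
  have hA0 : 0 ≤ A := by positivity
  rcases hA0.eq_or_lt with h | hAp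
  · rw [← h, Real.zero_rpow (by linarith)]
    exact mul_nonneg (by positivity) (MeasureTheory.integral_nonneg fun t => by positivity)
  have hB := bhB_zero A hAp
  obtain ⟨c, hc⟩ : ∃ c, c = Real.log A + 1/2 := ⟨_, rfl⟩
  have key : rexp (-δ * c) * A ≤ ∫ t, (‖∑ k, a k * bhz (t k)‖ ^ 2) ^ (1 - δ) ∂(bhP N) := by
    have hm := MeasureTheory.integral_mono (((i1.sub (i2.const_mul δ)).add (i1.const_mul (δ * c))).const_mul (rexp (-δ * c))) i3
      (fun t => bh_pt δ c (‖∑ k, a k * bhz (t k)‖ ^ 2) h1 (by positivity))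
    refine le_trans ?_ hm
    rw [MeasureTheory.integral_const_mul]
    have e2 : ∫ t, ((fun t : Fin N → ℝ => ‖∑ k, a k * bhz (t k)‖ ^ 2) - (fun t : Fin N → ℝ => δ * bhφ (∑ k, a k * bhz (t k))) +
        (fun t : Fin N → ℝ => δ * c * ‖∑ k, a k * bhz (t k)‖ ^ 2)) t ∂(bhP N) = A - δ * (∫ t, bhφ (∑ k, a k * bhz (t k)) ∂(bhP N)) + δ * c * A := by
      rw [MeasureTheory.integral_add' (i1.sub (i2.const_mul δ)) (i1.const_mul (δ * c)),
        MeasureTheory.integral_sub' i1 (i2.const_mul δ), MeasureTheory.integral_const_mul, MeasureTheory.integral_const_mul, hsq]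
    have e3 : A ≤ A - δ * (∫ t, bhφ (∑ k, a k * bhz (t k)) ∂(bhP N)) + δ * c * A := by
      have : δ * (∫ t, bhφ (∑ k, a k * bhz (t k)) ∂(bhP N)) ≤ δ * (A * Real.log A + A / 2) :=
        mul_le_mul_of_nonneg_left (hent.trans hB) h0.le
      rw [hc]; linarith
    rw [← e2] at e3
    exact mul_le_mul_of_nonneg_left e3 (Real.exp_pos _).le
  have e4 : A ^ (1 - δ) = rexp (δ/2) * (rexp (-δ * c) * A) := by
    rw [Real.rpow_sub hAp, Real.rpow_one, div_eq_mul_inv, ← Real.rpow_neg hA0, Real.rpow_def_of_pos hAp, ← mul_assoc,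
      ← Real.exp_add, hc, mul_comm]
    congr 2; ring
  rw [e4]
  exact mul_le_mul_of_nonneg_left key (Real.exp_pos _).le

noncomputable def bhC : ℕ → ℝ
  | 0 => 1
  | (m + 1) => bhC m * exp (1 / (4 * ((m:ℝ) + 1)))

theorem bhC_pos (m : ℕ) : 0 < bhC m := by
  induction m with
  | zero => simp [bhC]
  | succ m ih => simp only [bhC]; positivity

theorem bh_main (N : ℕ) (m : ℕ) : ∀ (U : MultilinearMap ℂ (fun _ : Fin (m+1) => (Fin N → ℂ)) ℂ) (M : ℝ),
    (∀ z, (∀ k, ‖z k‖ ≤ 1) → ‖U z‖ ≤ M) →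
    ∑ i : Fin (m+1) → Fin N, (‖U (fun k => Pi.single (i k) (1:ℂ))‖ ^ 2) ^ (((m:ℝ)+1)/(m+2)) ≤
      ((bhC m * M) ^ 2) ^ (((m:ℝ)+1)/(m+2)) := by
  induction m with
  | zero =>
    intro U M hU
    have hM : 0 ≤ M := (norm_nonneg _).trans (hU 0 (by simp))
    have e : ((((0:ℕ):ℝ)+1)/(((0:ℕ):ℝ)+2)) = 1/2 := by norm_num
    rw [e]
    have e2 : ∀ x : ℝ, 0 ≤ x → (x^2) ^ (1/2 : ℝ) = x := fun x hx => by
      rw [← Real.sqrt_eq_rpow, Real.sqrt_sq hx]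
    rw [e2 _ (mul_nonneg (bhC_pos 0).le hM)]
    simp only [e2 _ (norm_nonneg _)]
    simp only [bhC, one_mul]
    -- choose signs
    let a : Fin N → ℂ := fun x => U (fun _ => Pi.single x (1:ℂ))
    let s : Fin N → ℂ := fun x => if a x = 0 then 0 else (starRingEnd ℂ (a x)) / ‖a x‖
    have hs : ∀ x, s x * a x = ‖a x‖ := by
      intro x
      by_cases h : a x = 0
      · simp [s, h]
      · have : (‖a x‖ : ℂ) ≠ 0 := by simpa using h
        simp only [s, h, if_false]
        rw [div_mul_eq_mul_div, mul_comm, Complex.mul_conj, Complex.normSq_eq_norm_sq]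
        push_cast; field_simp
    have hs1 : ∀ x, ‖s x‖ ≤ 1 := by
      intro x
      by_cases h : a x = 0
      · simp [s, h]
      · simp only [s, h, if_false]
        rw [norm_div]; simp [h]
    have key : U (fun _ => s) = ∑ x, s x * a x := by
      have : s = ∑ x, s x • (Pi.single x (1:ℂ) : Fin N → ℂ) := by
        funext y; simp [Finset.sum_apply, Pi.single_apply]
      have h2 := map_sum (U.toLinearMap (fun _ => 0) 0) (fun x => s x • (Pi.single x (1:ℂ) : Fin N → ℂ)) Finset.univ
      rw [← this] at h2
      have e3 : ∀ y : Fin N → ℂ, U.toLinearMap (fun _ => 0) 0 y = U (fun _ => y) := by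
        intro y
        simp only [MultilinearMap.toLinearMap_apply]
        congr 1; funext k
        have : k = 0 := Fin.fin_one_eq_zero k
        subst this; simp
      rw [e3] at h2
      rw [h2]
      refine Finset.sum_congr rfl fun x _ => ?_
      rw [LinearMap.map_smul, e3]; rfl
    have h3 := hU (fun _ => s) (fun k => (pi_norm_le_iff_of_nonneg zero_le_one).2 hs1)
    rw [key] at h3
    simp only [hs] at h3
    rw [← Complex.ofReal_sum, Complex.norm_real, Real.norm_of_nonneg (Finset.sum_nonneg fun _ _ => norm_nonneg _)] at h3
    refine le_trans (le_of_eq ?_) h3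
    refine (Fintype.sum_equiv (Equiv.funUnique (Fin 1) (Fin N)).symm _ _ (fun x => ?_)).symm
    rfl
  | succ m ih =>
    intro U M hU
    have hM : 0 ≤ M := (norm_nonneg _).trans (hU 0 (by simp))
    have hm2 : (0:ℝ) < (m:ℝ) + 2 := by positivity
    have hm3 : (0:ℝ) < (m:ℝ) + 3 := by positivity
    have hm1 : (0:ℝ) < (m:ℝ) + 1 := by positivity
    have hCM : 0 ≤ bhC m * M := mul_nonneg (bhC_pos m).le hM
    let T : ℝ := exp (1/((m:ℝ)+2)/2) * ((bhC m * M) ^ 2) ^ (((m:ℝ)+1)/(m+2))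
    have hT0 : 0 ≤ T := by positivity
    let c : (Fin (m+2) → Fin N) → ℂ := fun i => U (fun k => Pi.single (i k) (1:ℂ))
    have hS : ∀ k : Fin (m+2), ∑ j : Fin (m+1) → Fin N, (∑ x, ‖c (k.insertNth x j)‖ ^ 2) ^ (((m:ℝ)+1)/(m+2)) ≤ T := by
      intro k
      have hd : 1 - 1/((m:ℝ)+2) = ((m:ℝ)+1)/(m+2) := by field_simp; ring
      have hδ1 : 1/((m:ℝ)+2) < 1 := by rw [div_lt_one hm2]; linarith
      have kh : ∀ j : Fin (m+1) → Fin N, (∑ x, ‖c (k.insertNth x j)‖ ^ 2) ^ (((m:ℝ)+1)/(m+2)) ≤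
          exp (1/((m:ℝ)+2)/2) * ∫ t, (‖∑ x, c (k.insertNth x j) * bhz (t x)‖ ^ 2) ^ (((m:ℝ)+1)/(m+2)) ∂(bhP N) := by
        intro j
        have := bh_khinchine N (1/((m:ℝ)+2)) (by positivity) hδ1 (fun x => c (k.insertNth x j))
        rwa [hd] at this
      refine (Finset.sum_le_sum fun j _ => kh j).trans ?_
      rw [← Finset.mul_sum]
      refine mul_le_mul_of_nonneg_left ?_ (exp_pos _).le
      have hInt : ∀ j : Fin (m+1) → Fin N, MeasureTheory.Integrable
          (fun t : Fin N → ℝ => (‖∑ x, c (k.insertNth x j) * bhz (t x)‖ ^ 2) ^ (((m:ℝ)+1)/(m+2))) (bhP N) := by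
        intro j
        have := bh_sum_integrable N (fun x => c (k.insertNth x j)) (fun z => (‖z‖^2) ^ (((m:ℝ)+1)/(m+2)))
          (Continuous.rpow_const (by fun_prop) (fun _ => Or.inr (by positivity))) 0
        simpa using this
      rw [← MeasureTheory.integral_finsetSum _ (fun j _ => hInt j)]
      have hpt : ∀ t : Fin N → ℝ, ∑ j : Fin (m+1) → Fin N, (‖∑ x, c (k.insertNth x j) * bhz (t x)‖ ^ 2) ^ (((m:ℝ)+1)/(m+2))
          ≤ ((bhC m * M) ^ 2) ^ (((m:ℝ)+1)/(m+2)) := by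
        intro t
        have := ih (U.curryMid k (fun x => bhz (t x))) M (by
          intro z hz
          rw [MultilinearMap.curryMid_apply_apply]
          apply hU
          intro l
          refine Fin.succAboveCases k ?_ (fun l => ?_) l
          · rw [Fin.insertNth_apply_same]
            exact (pi_norm_le_iff_of_nonneg zero_le_one).2 fun x => (bhz_norm _).le
          · rw [Fin.insertNth_apply_succAbove]; exact hz l)
        refine le_trans (le_of_eq ?_) this
        refine Finset.sum_congr rfl fun j _ => ?_
        congr 3
        have e4 : (fun x => bhz (t x)) = ∑ x, bhz (t x) • (Pi.single x (1:ℂ) : Fin N → ℂ) := by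
          funext y; simp [Finset.sum_apply, Pi.single_apply]
        rw [e4, map_sum, _root_.sum_apply]
        refine Finset.sum_congr rfl fun x _ => ?_
        rw [LinearMap.map_smul, _root_.smul_apply, MultilinearMap.curryMid_apply_apply, smul_eq_mul, mul_comm]
        congr 1
        simp only [c]
        congr 1
        funext l
        refine Fin.succAboveCases k ?_ (fun l => ?_) l
        · simp
        · simp
      calc ∫ t, ∑ j : Fin (m+1) → Fin N, (‖∑ x, c (k.insertNth x j) * bhz (t x)‖ ^ 2) ^ (((m:ℝ)+1)/(m+2)) ∂(bhP N)
          ≤ ∫ t, ((bhC m * M) ^ 2) ^ (((m:ℝ)+1)/(m+2)) ∂(bhP N) :=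
            MeasureTheory.integral_mono (MeasureTheory.integrable_finsetSum _ fun j _ => hInt j)
              (MeasureTheory.integrable_const _) hpt
        _ = _ := by simp
    have hB := bh_blei m (fun i => ‖c i‖₊ ^ 2) T.toNNReal (by
      intro k
      rw [← NNReal.coe_le_coe, Real.coe_toNNReal _ hT0]
      push_cast
      exact hS k)
    rw [← NNReal.coe_le_coe] at hB
    rw [NNReal.coe_rpow, Real.coe_toNNReal _ hT0] at hB
    push_cast at hB
    have e1 : (((m+1:ℕ):ℝ)+1)/(((m+1:ℕ):ℝ)+2) = ((m:ℝ)+2)/(m+3) := by push_cast; ring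
    rw [e1]
    refine hB.trans (le_of_eq ?_)
    change T ^ _ = _
    simp only [T, bhC]
    have e5 : ∀ x : ℝ, 0 ≤ x → ∀ y : ℝ, (x^2)^y = x ^ (2*y) := fun x hx y => by
      rw [Real.rpow_mul hx]; norm_num
    rw [e5 _ hCM, e5 _ (mul_nonneg (mul_nonneg (bhC_pos m).le (exp_pos _).le) hM), Real.mul_rpow (exp_pos _).le (by positivity), ← Real.rpow_mul hCM,
      mul_right_comm (bhC m), 
      Real.mul_rpow hCM (by positivity), ← Real.exp_mul, ← Real.exp_mul, mul_comm]
    congr 2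
    · field_simp
    · field_simp; ring

theorem bh_const (m : ℕ) (hm : 32 ≤ m) : bhC m ≤ (m:ℝ) ^ (0.304975:ℝ) := by
  induction m, hm using Nat.le_induction with
  | base =>
    have h : bhC 32 = exp (∑ j ∈ Finset.range 32, 1/(4*((j:ℝ)+1))) := by
      rw [Real.exp_sum]
      have : ∀ m, bhC m = ∏ j ∈ Finset.range m, exp (1/(4*((j:ℝ)+1))) := by
        intro m
        induction m with
        | zero => simp [bhC]
        | succ m ih => rw [Finset.prod_range_succ, ← ih]; rfl
      exact this 32
    rw [h, Real.rpow_def_of_pos (by norm_num)]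
    apply Real.exp_le_exp.2
    have h2 : Real.log ((32:ℕ):ℝ) = 5 * Real.log 2 := by
      rw [show ((32:ℕ):ℝ) = 2^5 by norm_num, Real.log_pow]; norm_num
    rw [h2]
    have := Real.log_two_gt_d9
    have h3 : (∑ j ∈ Finset.range 32, 1/(4*((j:ℝ)+1))) ≤ 1.02 := by
      simp only [Finset.sum_range_succ, Finset.sum_range_zero]; norm_num
    nlinarith
  | succ m hm ih =>
    have hm0 : (0:ℝ) < m := by
      have : 0 < m := by omega
      exact_mod_cast this
    simp only [bhC]
    push_cast
    have h1 : exp (1 / (4 * ((m:ℝ) + 1))) ≤ (((m:ℝ)+1)/m) ^ (0.304975:ℝ) := by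
      rw [Real.rpow_def_of_pos (by positivity)]
      apply Real.exp_le_exp.2
      have : 1/((m:ℝ)+1) ≤ Real.log (((m:ℝ)+1)/m) := by
        have := Real.one_sub_inv_le_log_of_pos (x := ((m:ℝ)+1)/m) (by positivity)
        refine le_trans (le_of_eq ?_) this
        field_simp; ring
      have h4 : 1 / (4 * ((m:ℝ) + 1)) = (1/4) * (1/((m:ℝ)+1)) := by field_simp
      rw [h4]
      have : 0 < 1/((m:ℝ)+1) := by positivity
      nlinarith
    calc _ ≤ (m:ℝ) ^ (0.304975:ℝ) * (((m:ℝ)+1)/m) ^ (0.304975:ℝ) := by gcongr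
      _ = _ := by
        rw [← Real.mul_rpow (by positivity) (by positivity)]
        congr 1; field_simp

theorem stmt11 (n : ℕ) (hn : 2 ^ 5 < n) (N : ℕ) (hN : 0 < N)
    (U : ContinuousMultilinearMap ℂ (fun _ : Fin n => (Fin N → ℂ)) ℂ) :
    BHcomplex n N U ≤ 1.00123230777 * ((n : ℝ) - 1) ^ (0.304975 : ℝ) * ‖U‖ := by
  obtain ⟨m, rfl⟩ : ∃ m, n = m + 1 := ⟨n - 1, by omega⟩
  have hm : 32 ≤ m := by omega
  have h := bh_main N m U.toMultilinearMap ‖U‖ (by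
    intro z hz
    refine (U.le_opNorm z).trans ?_
    exact mul_le_of_le_one_right (norm_nonneg _) (Finset.prod_le_one (fun _ _ => norm_nonneg _) fun k _ => hz k))
  have e5 : ∀ x : ℝ, 0 ≤ x → ∀ y : ℝ, (x^2)^y = x ^ (2*y) := fun x hx y => by
    rw [Real.rpow_mul hx]; norm_num
  have hC0 : 0 ≤ bhC m * ‖U‖ := mul_nonneg (bhC_pos m).le (norm_nonneg _)
  have hmm : (0:ℝ) ≤ m := by positivity
  unfold BHcomplex
  have e6 : ((2 * ((m+1:ℕ):ℝ)) / (((m+1:ℕ):ℝ) + 1)) = 2 * (((m:ℝ)+1)/(m+2)) := by push_cast; field_simp; ring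
  have e7 : ((((m+1:ℕ):ℝ) + 1) / (2 * ((m+1:ℕ):ℝ))) = (2 * (((m:ℝ)+1)/(m+2)))⁻¹ := by push_cast; field_simp; ring
  rw [e6, e7]
  have h2 : ∑ i : Fin (m+1) → Fin N, ‖U (fun k => Pi.single (i k) (1:ℂ))‖ ^ (2 * (((m:ℝ)+1)/(m+2))) ≤ (bhC m * ‖U‖) ^ (2 * (((m:ℝ)+1)/(m+2))) := by
    rw [← e5 _ hC0]
    refine le_trans (le_of_eq ?_) h
    refine Finset.sum_congr rfl fun i _ => ?_
    rw [← e5 _ (norm_nonneg _)]; rfl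
  refine (Real.rpow_le_rpow (Finset.sum_nonneg fun _ _ => by positivity) h2 (by positivity)).trans ?_
  rw [Real.rpow_rpow_inv hC0 (by positivity)]
  gcongr
  have := bh_const m hm
  have e8 : (((m+1:ℕ):ℝ) - 1) = m := by push_cast; ring
  rw [e8]
  have : 0 ≤ (m:ℝ) ^ (0.304975:ℝ) := by positivity
  linarith
end
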